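/- arXiv:1902.07325 — 2 statements merged into one kernel-verified Lean document; each statement's English description precedes it below -/
import Mathlib

section
/- The Tits algebra ℝΣ[𝒜] of any affine hyperplane arrangement 𝒜 is unital, and its unit element is υ = Σ_F (−1)^{rk(F)} H_F, the sum over all essentially bounded faces F of 𝒜; that is, υ · H_G = H_G = H_G · υ for every face G of 𝒜. -/
open Finset MeasureTheory

noncomputable section

namespace CharElts

/-- Ambient Euclidean space `ℝ^n`. -/
abbrev V (n : ℕ) := EuclideanSpace ℝ (Fin n)

/-- An affine functional on `ℝ^n`; a hyperplane is its zero set. -/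
abbrev AffForm (n : ℕ) := V n →ᵃ[ℝ] ℝ

/-- The hyperplane determined by an affine functional. -/
def hypSet {n : ℕ} (ℓ : AffForm n) : Set (V n) := {x | ℓ x = 0}

variable {n : ℕ} (𝒜 : Finset (AffForm n))

/-- Index type for the hyperplanes of the arrangement. -/
abbrev Idx := {ℓ : AffForm n // ℓ ∈ 𝒜}

/-- The (possibly empty) set cut out by a sign vector `σ`. -/
def faceSet (σ : Idx 𝒜 → SignType) : Set (V n) :=
  {x | ∀ ℓ : Idx 𝒜, SignType.sign (ℓ.1 x) = σ ℓ}

/-- A face of the arrangement: a sign vector whose face set is nonempty. -/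
@[ext] structure Face where
  sgn : Idx 𝒜 → SignType
  nonempty : (faceSet 𝒜 sgn).Nonempty

open Classical in
instance : Fintype (Face 𝒜) :=
  Fintype.ofInjective Face.sgn (fun F G h => by cases F; cases G; simpa using h)

/-- The underlying point set of a face. -/
def Face.carrier (F : Face 𝒜) : Set (V n) := faceSet 𝒜 F.sgn

/-- A flat: a nonempty intersection of some subcollection of the hyperplanes
(the empty intersection gives all of `ℝ^n`). -/
def IsFlat (X : Set (V n)) : Prop :=
  X.Nonempty ∧ ∃ P : Idx 𝒜 → Prop, X = ⋂ ℓ ∈ {ℓ : Idx 𝒜 | P ℓ}, hypSet ℓ.1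

/-- The poset of flats, ordered by inclusion. -/
def Flat := {X : Set (V n) // IsFlat 𝒜 X}

instance : PartialOrder (Flat 𝒜) :=
  inferInstanceAs (PartialOrder {X : Set (V n) // IsFlat 𝒜 X})

lemma flat_eq_inter (X : Flat 𝒜) :
    X.1 = ⋂ ℓ ∈ {ℓ : Idx 𝒜 | X.1 ⊆ hypSet ℓ.1}, hypSet ℓ.1 := by
  obtain ⟨Z, hne, P, rfl⟩ := X
  apply subset_antisymm
  · intro x hx
    simp only [Set.mem_iInter, Set.mem_setOf_eq]
    intro ℓ hℓ
    exact hℓ hx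
  · intro x hx
    simp only [Set.mem_iInter, Set.mem_setOf_eq] at hx ⊢
    intro ℓ hℓ
    refine hx ℓ ?_
    intro y hy
    simp only [Set.mem_iInter, Set.mem_setOf_eq] at hy
    exact hy ℓ hℓ

open Classical in
instance : Fintype (Flat 𝒜) :=
  Fintype.ofInjective (fun X : Flat 𝒜 => {ℓ : Idx 𝒜 | X.1 ⊆ hypSet ℓ.1}) <| by
    intro X Y h
    dsimp only at h
    apply Subtype.ext
    rw [flat_eq_inter 𝒜 X, flat_eq_inter 𝒜 Y, h]

/-- The top flat: the whole ambient space. -/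
def topFlat : Flat 𝒜 :=
  ⟨Set.univ, ⟨⟨0, trivial⟩, fun _ => False, by simp⟩⟩

/-- The support of a face: the intersection of the hyperplanes on which it lies. -/
def supp (F : Face 𝒜) : Flat 𝒜 :=
  ⟨⋂ ℓ ∈ {ℓ : Idx 𝒜 | F.sgn ℓ = 0}, hypSet ℓ.1, by
    constructor
    · obtain ⟨x, hx⟩ := F.nonempty
      refine ⟨x, ?_⟩
      simp only [Set.mem_iInter, Set.mem_setOf_eq]
      intro ℓ hℓ
      have h0 := hx ℓ
      rw [hℓ] at h0
      simpa [hypSet, sign_eq_zero_iff] using h0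
    · exact ⟨fun ℓ => F.sgn ℓ = 0, rfl⟩⟩

/-- The dimension of (the affine hull of) a subset of `ℝ^n`. -/
def dimS (X : Set (V n)) : ℕ := Module.finrank ℝ (vectorSpan ℝ X)

open Classical in
/-- An element `w = Σ_F w^F H_F` of the Tits algebra (recorded by its coefficient
vector) is *characteristic of parameter `t`* if for every flat `X`, the sum of the
coefficients of the faces with support contained in `X` equals `t ^ rk X`,
where `rk X = dim X - d` and `d` is the common dimension of the minimal flats. -/
def IsCharacteristic (d : ℕ) (w : Face 𝒜 → ℝ) (t : ℝ) : Prop :=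
  ∀ X : Flat 𝒜,
    (∑ F : Face 𝒜, if (supp 𝒜 F).1 ⊆ X.1 then w F else 0) = t ^ (dimS X.1 - d)

/-- The sign vector of the Tits product `FG` of two faces. -/
def combineSgn {I : Type*} (σ τ : I → SignType) : I → SignType :=
  fun ℓ => if σ ℓ = 0 then τ ℓ else σ ℓ

open Classical in
/-- The product of the Tits algebra, on coefficient vectors:
`(u·v)^C = Σ_{F,G : FG = C} u^F v^G`, extending `H_F · H_G = H_{FG}` bilinearly. -/
def mulT (u v : Face 𝒜 → ℝ) : Face 𝒜 → ℝ :=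
  fun C => ∑ F : Face 𝒜, ∑ G : Face 𝒜,
    if combineSgn F.sgn G.sgn = C.sgn then u F * v G else 0

open Classical in
/-- The basis element `H_F` of the Tits algebra, as a coefficient vector. -/
def unitV (F : Face 𝒜) : Face 𝒜 → ℝ := fun G => if G = F then 1 else 0

/-- A chamber: a face whose sign vector is nowhere zero. -/
def IsChamber (F : Face 𝒜) : Prop := ∀ ℓ : Idx 𝒜, F.sgn ℓ ≠ 0

open Classical in
/-- `IsMoebius 𝒜 μ` states that `μ` is the Möbius function of the poset of
flats of `𝒜` (these conditions determine `μ` uniquely). -/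
def IsMoebius (μ : Flat 𝒜 → Flat 𝒜 → ℝ) : Prop :=
  (∀ X, μ X X = 1) ∧
  (∀ X Y : Flat 𝒜, X < Y →
    (∑ Z : Flat 𝒜, if X ≤ Z ∧ Z ≤ Y then μ X Z else 0) = 0) ∧
  (∀ X Y : Flat 𝒜, ¬ X ≤ Y → μ X Y = 0)

open Classical in
/-- `χ(𝒜^X, t) = Σ_{Y ≤ X} μ(Y, X) t^{rk Y}`: the characteristic polynomial of the
arrangement under the flat `X`.  Taking `X = ⊤` gives the characteristic
polynomial of `𝒜` itself. -/
def charPolyUnder (μ : Flat 𝒜 → Flat 𝒜 → ℝ) (d : ℕ) (X : Flat 𝒜) (t : ℝ) : ℝ :=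
  ∑ Y : Flat 𝒜, if Y ≤ X then μ Y X * t ^ (dimS Y.1 - d) else 0

/-- The space of directions `L = ⋂_{H ∈ 𝒜} dir(H)`: the intersection of the kernels of
the linear parts of the defining functionals. -/
def dirL : Submodule ℝ (V n) := ⨅ ℓ : Idx 𝒜, LinearMap.ker ℓ.1.linear

/-- A face is essentially bounded if its image in `ℝ^n / L` is bounded. -/
def EssBounded (F : Face 𝒜) : Prop :=
  Bornology.IsBounded ((dirL 𝒜).mkQ '' F.carrier)

/-- A hyperplane (zero set of a nonconstant affine functional) is nonempty. -/
lemma hyp_nonempty (ℓ : AffForm n) (h : ℓ.linear ≠ 0) : (hypSet ℓ).Nonempty := by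
  obtain ⟨v, hv⟩ : ∃ v, ℓ.linear v ≠ 0 := by
    by_contra hc
    push_neg at hc
    exact h (LinearMap.ext fun v => hc v)
  refine ⟨((-ℓ 0) / (ℓ.linear v)) • v, ?_⟩
  have hdecomp : ℓ (((-ℓ 0) / (ℓ.linear v)) • v)
      = ℓ.linear (((-ℓ 0) / (ℓ.linear v)) • v) + ℓ 0 := by
    conv_lhs => rw [show ((-ℓ 0) / (ℓ.linear v)) • v = ((-ℓ 0) / (ℓ.linear v)) • v +ᵥ (0 : V n)
      from (add_zero _).symm]
    rw [AffineMap.map_vadd]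
    rfl
  show ℓ _ = 0
  rw [hdecomp, LinearMap.map_smul, smul_eq_mul, div_mul_cancel₀ _ hv, neg_add_cancel]

/-!
Removing a hyperplane `H` from `𝒜` induces a homomorphism of Tits algebras, because the Tits product
is computed one hyperplane at a time. It sends `υ` to the corresponding element of the smaller
arrangement. Indeed, a face missed by `H` comes from a single face, of the same rank and
boundedness, and a face `D` cut by `H` comes from three. If `H` does not change `L`, then
`D` is essentially bounded iff both of its sides are, while `D ∩ H` is so iff at least one side is,
so the signed contributions add up by inclusion-exclusion; if `H` shrinks `L`, both sides are
unbounded and `D ∩ H` inherits rank and boundedness from `D`. Boundedness is read off recession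
cones.

These homomorphisms are jointly injective unless all hyperplanes have a common point, and in the
latter case `υ` is the basis element of the central face. Hence `υ` is a unit by induction on `𝒜`.
-/

section Sign

variable {𝕜 : Type*} [Field 𝕜] [LinearOrder 𝕜] [IsStrictOrderedRing 𝕜]

lemma convex_setOf_sign_eq (s : SignType) : Convex 𝕜 {a : 𝕜 | SignType.sign a = s} := by
  cases s
  · simp
  · suffices h : {a : 𝕜 | SignType.sign a = .neg} = Set.Iio 0 from h ▸ convex_Iio 0
    exact Set.ext fun a ↦ sign_eq_neg_one_iff
  · suffices h : {a : 𝕜 | SignType.sign a = .pos} = Set.Ioi 0 from h ▸ convex_Ioi 0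
    exact Set.ext fun a ↦ sign_eq_one_iff

lemma zero_mem_segment_of_sign_ne {a b : 𝕜} (h : SignType.sign a ≠ SignType.sign b) :
    (0 : 𝕜) ∈ segment 𝕜 a b := by
  rw [segment_eq_uIcc, Set.mem_uIcc]
  by_contra! hab
  rcases lt_or_ge 0 a with ha | ha
  · grind [sign_pos]
  · grind [sign_neg]

/-- The closed sign condition of `s`, i.e. the face order `0 < ±1` on signs: `a` is zero or has
sign `s`. -/
def Conforms (a : 𝕜) (s : SignType) : Prop := a = 0 ∨ SignType.sign a = s

lemma Conforms.mul_left {a c : 𝕜} {s : SignType} (ha : Conforms a s) (hc : 0 ≤ c) :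
    Conforms (c * a) s := by
  rcases hc.eq_or_lt with rfl | hc
  · exact .inl (zero_mul a)
  · exact ha.imp (fun h ↦ by rw [h, mul_zero]) fun h ↦ by rw [sign_mul, sign_pos hc, one_mul, h]

lemma sign_add_of_conforms {a b : 𝕜} {s : SignType} (ha : SignType.sign a = s)
    (hb : Conforms b s) : SignType.sign (a + b) = s := by
  rcases hb with rfl | hb
  · rwa [add_zero]
  · cases s <;> simp_all [sign_eq_zero_iff, sign_eq_one_iff, sign_eq_neg_one_iff, add_pos, add_neg]

lemma Conforms.add {a b : 𝕜} {s : SignType} (ha : Conforms a s) (hb : Conforms b s) :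
    Conforms (a + b) s := by
  rcases ha with rfl | ha
  · rwa [zero_add]
  · exact .inr (sign_add_of_conforms ha hb)

lemma Conforms.eq_zero_of_add_eq_zero {a b : 𝕜} {s : SignType} (ha : Conforms a s)
    (hb : Conforms b s) (hab : a + b = 0) : a = 0 := by
  rcases ha with ha | ha
  · exact ha
  · have hs := sign_add_of_conforms ha hb
    rw [hab, sign_zero] at hs
    exact sign_eq_zero_iff.1 (ha.trans hs.symm)

end Sign

section AffineForm

open Filter Topology AffineSpace

lemma apply_add_smul {𝕜 E : Type*} [CommRing 𝕜] [AddCommGroup E] [Module 𝕜 E]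
    (f : E →ᵃ[𝕜] 𝕜) (x v : E) (t : 𝕜) : f (x + t • v) = f x + t * f.linear v := by
  rw [add_comm, ← vadd_eq_add, f.map_vadd, map_smul, vadd_eq_add, smul_eq_mul, add_comm]

lemma apply_sub_eq {𝕜 E : Type*} [CommRing 𝕜] [AddCommGroup E] [Module 𝕜 E]
    (f : E →ᵃ[𝕜] 𝕜) (x y : E) : f.linear (x - y) = f x - f y :=
  f.linearMap_vsub x y

lemma sign_apply_eq_of_mem_segment {𝕜 E : Type*} [Field 𝕜] [LinearOrder 𝕜]
    [IsStrictOrderedRing 𝕜] [AddCommGroup E] [Module 𝕜 E] (f : E →ᵃ[𝕜] 𝕜) {x y z : E} {s : SignType}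
    (hx : SignType.sign (f x) = s) (hy : SignType.sign (f y) = s) (hz : z ∈ segment 𝕜 x y) :
    SignType.sign (f z) = s :=
  (convex_setOf_sign_eq s).segment_subset hx hy (image_segment 𝕜 f x y ▸ Set.mem_image_of_mem f hz)

lemma exists_mem_segment_apply_eq_zero {𝕜 E : Type*} [Field 𝕜] [LinearOrder 𝕜]
    [IsStrictOrderedRing 𝕜] [AddCommGroup E] [Module 𝕜 E] (f : E →ᵃ[𝕜] 𝕜) {x y : E}
    (hxy : SignType.sign (f x) ≠ SignType.sign (f y)) : ∃ z ∈ segment 𝕜 x y, f z = 0 := by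
  have h0 : (0 : 𝕜) ∈ f '' segment 𝕜 x y :=
    image_segment 𝕜 f x y ▸ zero_mem_segment_of_sign_ne hxy
  exact h0

lemma eventually_sign_apply_add_smul_eq {E : Type*} [AddCommGroup E] [Module ℝ E]
    (f : E →ᵃ[ℝ] ℝ) {x : E} (v : E) (hx : f x ≠ 0) :
    ∀ᶠ t in 𝓝 (0 : ℝ), SignType.sign (f (x + t • v)) = SignType.sign (f x) := by
  have hlim : Tendsto (fun t : ℝ ↦ f x + t * f.linear v) (𝓝 0) (𝓝 (f x)) :=
    Continuous.tendsto' (by fun_prop) _ _ (by simp)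
  have hsign := (continuousAt_sign_of_ne_zero hx).tendsto.comp hlim
  simpa only [Function.comp_def, nhds_discrete, tendsto_pure, ← apply_add_smul] using hsign

lemma eventually_sign_eq_of_asymptoticNhds {E : Type*} [AddCommGroup E] [Module ℝ E]
    [TopologicalSpace E] [IsTopologicalAddGroup E] [ContinuousSMul ℝ E]
    (f : E →L[ℝ] ℝ) (c : ℝ) {v : E} (hv : f v ≠ 0) :
    ∀ᶠ y in asymptoticNhds ℝ E v, SignType.sign (f y + c) = SignType.sign (f v) := by
  rw [asymptoticNhds_eq_smul, ← map₂_smul, ← map_prod_eq_map₂, eventually_map]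
  have hlim : Tendsto (fun p : ℝ × E ↦ f p.2 + c / p.1) (atTop ×ˢ 𝓝 v) (𝓝 (f v)) := by
    simpa only [add_zero, Function.comp_def] using
      ((f.continuous.tendsto v).comp tendsto_snd).add (tendsto_fst.const_div_atTop c)
  have hsign := (continuousAt_sign_of_ne_zero hv).tendsto.comp hlim
  simp only [Function.comp_def, nhds_discrete, tendsto_pure] at hsign
  filter_upwards [hsign, tendsto_fst.eventually_gt_atTop 0] with p hp hpos
  have hscale : f (p.1 • p.2) + c = p.1 * (f p.2 + c / p.1) := by
    rw [map_smul, smul_eq_mul, mul_add, mul_div_cancel₀ _ hpos.ne']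
  rw [hscale, sign_mul, sign_pos hpos, one_mul, hp]

lemma finrank_inf_ker_add_one {K E : Type*} [Field K] [AddCommGroup E] [Module K E]
    [FiniteDimensional K E] (W : Submodule K E) (f : Module.Dual K E)
    (hf : ¬ W ≤ LinearMap.ker f) :
    Module.finrank K ↥(W ⊓ LinearMap.ker f) + 1 = Module.finrank K W := by
  have hres : f.domRestrict W ≠ 0 := fun h ↦ hf fun v hv ↦
    LinearMap.mem_ker.2 (DFunLike.congr_fun h (⟨v, hv⟩ : W))
  have hker : Module.finrank K (LinearMap.ker (f.domRestrict W)) =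
      Module.finrank K ↥(W ⊓ LinearMap.ker f) := by
    rw [LinearMap.ker_domRestrict, ← Submodule.map_comap_subtype,
      Submodule.finrank_map_subtype_eq]
  rw [← hker]
  exact Module.Dual.finrank_ker_add_one_of_ne_zero (f := f.domRestrict W) hres

end AffineForm

section Face

open Filter Topology AffineSpace

variable {𝒜}

variable (𝒜) in
/-- The face of `𝒜` containing the point `x`. -/
def faceAt (x : V n) : Face 𝒜 where
  sgn ℓ := SignType.sign (ℓ.1 x)
  nonempty := ⟨x, fun _ ↦ rfl⟩

lemma mem_carrier_iff {F : Face 𝒜} {x : V n} : x ∈ F.carrier 𝒜 ↔ faceAt 𝒜 x = F := by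
  rw [Face.ext_iff, funext_iff]
  rfl

lemma exists_faceAt_eq (F : Face 𝒜) : ∃ x, faceAt 𝒜 x = F :=
  F.nonempty.imp fun _ ↦ mem_carrier_iff.1

lemma Face.convex_carrier (F : Face 𝒜) : Convex ℝ (F.carrier 𝒜) :=
  convex_iff_segment_subset.2 fun _ hx _ hy _ hz ℓ ↦
    sign_apply_eq_of_mem_segment ℓ.1 (hx ℓ) (hy ℓ) hz

/-- The Tits product `FG`. It is nonempty because it contains every point reached from a point
of `F` by a sufficiently small step towards a point of `G`. -/
def Face.mul (F G : Face 𝒜) : Face 𝒜 where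
  sgn := combineSgn F.sgn G.sgn
  nonempty := by
    obtain ⟨x, hx⟩ := F.nonempty
    obtain ⟨y, hy⟩ := G.nonempty
    have hstep : ∀ ℓ : Idx 𝒜, ∀ᶠ t in 𝓝[>] (0 : ℝ),
        SignType.sign (ℓ.1 (x + t • (y - x))) = combineSgn F.sgn G.sgn ℓ := by
      intro ℓ
      by_cases h0 : F.sgn ℓ = 0
      · filter_upwards [self_mem_nhdsWithin] with t ht
        have hx0 : ℓ.1 x = 0 := sign_eq_zero_iff.1 ((hx ℓ).trans h0)
        rw [apply_add_smul, apply_sub_eq, hx0, zero_add, sub_zero, sign_mul,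
          sign_pos ht, one_mul, hy ℓ, combineSgn, if_pos h0]
      · have hx0 : ℓ.1 x ≠ 0 := fun h ↦ h0 (by rw [← hx ℓ, h, sign_zero])
        filter_upwards [nhdsWithin_le_nhds
          (eventually_sign_apply_add_smul_eq ℓ.1 (y - x) hx0)] with t ht
        rw [ht, hx ℓ, combineSgn, if_neg h0]
    obtain ⟨t, ht⟩ := (eventually_all.2 hstep).exists
    exact ⟨x + t • (y - x), ht⟩

/-- The face of the subarrangement `ℬ` containing the face `F` of `𝒜`. -/
def Face.restrict {ℬ : Finset (AffForm n)} (h : ℬ ⊆ 𝒜) (F : Face 𝒜) : Face ℬ where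
  sgn ℓ := F.sgn ⟨ℓ.1, h ℓ.2⟩
  nonempty := F.nonempty.imp fun _ hx ℓ ↦ hx ⟨ℓ.1, h ℓ.2⟩

lemma mem_dirL_iff {v : V n} : v ∈ dirL 𝒜 ↔ ∀ ℓ : Idx 𝒜, ℓ.1.linear v = 0 := by
  simp only [dirL, Submodule.mem_iInf, LinearMap.mem_ker]

/-- The direction space of the affine hull of a face. -/
def Face.directions (F : Face 𝒜) : Submodule ℝ (V n) :=
  ⨅ ℓ : Idx 𝒜, ⨅ _ : F.sgn ℓ = 0, LinearMap.ker ℓ.1.linear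

lemma Face.mem_directions_iff {F : Face 𝒜} {v : V n} :
    v ∈ F.directions ↔ ∀ ℓ : Idx 𝒜, F.sgn ℓ = 0 → ℓ.1.linear v = 0 := by
  simp only [Face.directions, Submodule.mem_iInf, LinearMap.mem_ker]

lemma Face.dirL_le_directions (F : Face 𝒜) : dirL 𝒜 ≤ F.directions :=
  fun _ hv ↦ Face.mem_directions_iff.2 fun ℓ _ ↦ mem_dirL_iff.1 hv ℓ

lemma Face.sub_mem_directions {F : Face 𝒜} {x y : V n} (hx : x ∈ F.carrier 𝒜)
    (hy : y ∈ F.carrier 𝒜) : x - y ∈ F.directions := by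
  refine Face.mem_directions_iff.2 fun ℓ h0 ↦ ?_
  rw [apply_sub_eq, sign_eq_zero_iff.1 ((hx ℓ).trans h0), sign_eq_zero_iff.1 ((hy ℓ).trans h0),
    sub_zero]

lemma Face.eventually_add_smul_mem_carrier {F : Face 𝒜} {x v : V n} (hx : x ∈ F.carrier 𝒜)
    (hv : v ∈ F.directions) : ∀ᶠ t in 𝓝 (0 : ℝ), x + t • v ∈ F.carrier 𝒜 := by
  refine eventually_all.2 fun ℓ ↦ ?_
  by_cases h0 : F.sgn ℓ = 0
  · refine .of_forall fun t ↦ ?_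
    rw [apply_add_smul, Face.mem_directions_iff.1 hv ℓ h0, mul_zero, add_zero, hx ℓ]
  · have hx0 : ℓ.1 x ≠ 0 := fun h ↦ h0 (by rw [← hx ℓ, h, sign_zero])
    filter_upwards [eventually_sign_apply_add_smul_eq ℓ.1 v hx0] with t ht
    rw [ht, hx ℓ]

lemma Face.vectorSpan_carrier (F : Face 𝒜) : vectorSpan ℝ (F.carrier 𝒜) = F.directions := by
  apply le_antisymm
  · rw [vectorSpan_def, Submodule.span_le]
    rintro _ ⟨x, hx, y, hy, rfl⟩
    exact Face.sub_mem_directions hx hy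
  · intro v hv
    obtain ⟨x, hx⟩ := F.nonempty
    have hstep : ∀ᶠ t in 𝓝[>] (0 : ℝ), x + t • v ∈ F.carrier 𝒜 :=
      nhdsWithin_le_nhds (Face.eventually_add_smul_mem_carrier hx hv)
    obtain ⟨t, ht, htpos⟩ := (hstep.and self_mem_nhdsWithin).exists
    have htv : t • v ∈ vectorSpan ℝ (F.carrier 𝒜) := by
      simpa only [vsub_eq_sub, add_sub_cancel_left] using vsub_mem_vectorSpan ℝ ht hx
    exact (Submodule.smul_mem_iff _ (Set.mem_Ioi.1 htpos).ne').1 htv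

/-- The rank `dim F - dim L` of a face. -/
def Face.rank (F : Face 𝒜) : ℕ := dimS (F.carrier 𝒜) - Module.finrank ℝ (dirL 𝒜)

lemma Face.rank_add_finrank_dirL (F : Face 𝒜) :
    F.rank + Module.finrank ℝ (dirL 𝒜) = Module.finrank ℝ F.directions := by
  rw [Face.rank, dimS, F.vectorSpan_carrier,
    Nat.sub_add_cancel (Submodule.finrank_mono F.dirL_le_directions)]

/-- The directions of the rays that stay in the closure of a face. -/
def Face.recessionCone (F : Face 𝒜) : Set (V n) :=
  {v | ∀ ℓ : Idx 𝒜, Conforms (ℓ.1.linear v) (F.sgn ℓ)}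

lemma Face.dirL_subset_recessionCone (F : Face 𝒜) : (dirL 𝒜 : Set (V n)) ⊆ F.recessionCone :=
  fun _ hv ℓ ↦ .inl (mem_dirL_iff.1 hv ℓ)

lemma Face.add_mem_recessionCone {F : Face 𝒜} {u v : V n} (hu : u ∈ F.recessionCone)
    (hv : v ∈ F.recessionCone) : u + v ∈ F.recessionCone := fun ℓ ↦ by
  rw [map_add]
  exact (hu ℓ).add (hv ℓ)

lemma Face.smul_mem_recessionCone {F : Face 𝒜} {v : V n} {t : ℝ} (hv : v ∈ F.recessionCone)
    (ht : 0 ≤ t) : t • v ∈ F.recessionCone := fun ℓ ↦ by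
  rw [map_smul]
  exact (hv ℓ).mul_left ht

lemma Face.add_mem_carrier {F : Face 𝒜} {x v : V n} (hx : x ∈ F.carrier 𝒜)
    (hv : v ∈ F.recessionCone) : x + v ∈ F.carrier 𝒜 := fun ℓ ↦ by
  rw [← one_smul ℝ v, apply_add_smul, one_mul]
  exact sign_add_of_conforms (hx ℓ) (hv ℓ)

lemma Face.mem_dirL_of_add_mem_dirL {F : Face 𝒜} {u v : V n} (hu : u ∈ F.recessionCone)
    (hv : v ∈ F.recessionCone) (huv : u + v ∈ dirL 𝒜) : u ∈ dirL 𝒜 :=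
  mem_dirL_iff.2 fun ℓ ↦ (hu ℓ).eq_zero_of_add_eq_zero (hv ℓ) <| by
    rw [← map_add, mem_dirL_iff.1 huv ℓ]

instance isClosed_dirL : IsClosed (dirL 𝒜 : Set (V n)) := Submodule.closed_of_finiteDimensional _

lemma Face.mkQ_mem_asymptoticCone {F : Face 𝒜} {v : V n} (hv : v ∈ F.recessionCone) :
    (dirL 𝒜).mkQ v ∈ asymptoticCone ℝ ((dirL 𝒜).mkQ '' F.carrier 𝒜) := by
  obtain ⟨x, hx⟩ := F.nonempty
  have hray : ∀ᶠ t : ℝ in atTop,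
      t • (dirL 𝒜).mkQ v +ᵥ (dirL 𝒜).mkQ x ∈ (dirL 𝒜).mkQ '' F.carrier 𝒜 := by
    filter_upwards [eventually_ge_atTop 0] with t ht
    refine ⟨x + t • v, Face.add_mem_carrier hx (Face.smul_mem_recessionCone hv ht), ?_⟩
    rw [map_add, map_smul, vadd_eq_add, add_comm]
  exact ((tendsto_id.atTop_smul_const_tendsto_asymptoticNhds _).asymptoticNhds_vadd_const
    _).frequently hray.frequently

lemma Face.mem_recessionCone_of_mkQ_mem_asymptoticCone {F : Face 𝒜} {v : V n}
    (hv : (dirL 𝒜).mkQ v ∈ asymptoticCone ℝ ((dirL 𝒜).mkQ '' F.carrier 𝒜)) :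
    v ∈ F.recessionCone := by
  intro ℓ
  refine or_iff_not_imp_left.2 fun h0 ↦ ?_
  let f : V n ⧸ dirL 𝒜 →L[ℝ] ℝ := LinearMap.toContinuousLinearMap
    ((dirL 𝒜).liftQ ℓ.1.linear fun w hw ↦ mem_dirL_iff.1 hw ℓ)
  have hf : ∀ w, f ((dirL 𝒜).mkQ w) = ℓ.1.linear w := fun w ↦ rfl
  obtain ⟨_, ⟨x, hx, rfl⟩, hsign⟩ := (Frequently.and_eventually hv
    (eventually_sign_eq_of_asymptoticNhds f (ℓ.1 0) (v := (dirL 𝒜).mkQ v) h0)).exists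
  have hdecomp : f ((dirL 𝒜).mkQ x) + ℓ.1 0 = ℓ.1 x := by
    rw [hf, ← sub_zero x, apply_sub_eq, sub_zero, sub_add_cancel]
  rw [← hf, ← hsign, hdecomp, hx ℓ]

lemma essBounded_iff (F : Face 𝒜) :
    EssBounded 𝒜 F ↔ F.recessionCone ⊆ (dirL 𝒜 : Set (V n)) := by
  rw [EssBounded, isBounded_iff_asymptoticCone_subset_singleton]
  constructor
  · intro h v hv
    exact (Submodule.Quotient.mk_eq_zero _).1 (h (Face.mkQ_mem_asymptoticCone hv))
  · intro h w hw
    obtain ⟨v, rfl⟩ := (dirL 𝒜).mkQ_surjective w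
    exact (Submodule.Quotient.mk_eq_zero _).2
      (h (Face.mem_recessionCone_of_mkQ_mem_asymptoticCone hw))

end Face

section TitsAlgebra

variable {𝒜} {ℬ : Finset (AffForm n)}

open Classical in
lemma mulT_apply (u v : Face 𝒜 → ℝ) (C : Face 𝒜) :
    mulT 𝒜 u v C = ∑ F, u F * ∑ G, v G * if F.mul G = C then 1 else 0 := by
  simp only [mulT, mul_sum, mul_ite, mul_one, mul_zero, Face.ext_iff, Face.mul]

lemma sum_mulT_mul (u v φ : Face 𝒜 → ℝ) :
    ∑ C, mulT 𝒜 u v C * φ C = ∑ F, u F * ∑ G, v G * φ (F.mul G) := by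
  classical
  simp only [mulT_apply, mul_sum, sum_mul, mul_assoc]
  rw [sum_comm]
  refine sum_congr rfl fun F _ ↦ ?_
  rw [sum_comm]
  refine sum_congr rfl fun G _ ↦ ?_
  simp only [ite_mul, one_mul, zero_mul, mul_ite, mul_zero, sum_ite_eq, mem_univ, if_true]

lemma faceAt_mul {x : V n} (hx : ∀ ℓ ∈ 𝒜, ℓ x = 0) (F : Face 𝒜) : (faceAt 𝒜 x).mul F = F := by
  ext ℓ
  have h0 : (faceAt 𝒜 x).sgn ℓ = 0 := sign_eq_zero_iff.2 (hx ℓ.1 ℓ.2)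
  exact if_pos h0

lemma mul_faceAt {x : V n} (hx : ∀ ℓ ∈ 𝒜, ℓ x = 0) (F : Face 𝒜) : F.mul (faceAt 𝒜 x) = F := by
  ext ℓ
  have h0 : (faceAt 𝒜 x).sgn ℓ = 0 := sign_eq_zero_iff.2 (hx ℓ.1 ℓ.2)
  exact ite_eq_right_iff.2 fun h ↦ h0.trans h.symm

lemma sum_unitV_mul (F : Face 𝒜) (φ : Face 𝒜 → ℝ) : ∑ G, unitV 𝒜 F G * φ G = φ F := by
  classical
  simp only [unitV, ite_mul, one_mul, zero_mul, sum_ite_eq', mem_univ, if_true]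

lemma unitV_faceAt_mulT {x : V n} (hx : ∀ ℓ ∈ 𝒜, ℓ x = 0) (u : Face 𝒜 → ℝ) :
    mulT 𝒜 (unitV 𝒜 (faceAt 𝒜 x)) u = u := by
  classical
  ext C
  rw [mulT_apply, sum_unitV_mul]
  simp [faceAt_mul hx]

lemma mulT_unitV_faceAt {x : V n} (hx : ∀ ℓ ∈ 𝒜, ℓ x = 0) (u : Face 𝒜 → ℝ) :
    mulT 𝒜 u (unitV 𝒜 (faceAt 𝒜 x)) = u := by
  classical
  ext C
  simp only [mulT_apply, sum_unitV_mul, mul_faceAt hx]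
  simp

open Classical in
/-- The linear map `H_C ↦ H_D` from the Tits algebra of `𝒜` to that of a subarrangement `ℬ`,
where `D` is the face of `ℬ` containing `C`. -/
def pushforward (h : ℬ ⊆ 𝒜) : (Face 𝒜 → ℝ) →ₗ[ℝ] (Face ℬ → ℝ) where
  toFun u D := ∑ C with C.restrict h = D, u C
  map_add' u v := funext fun _ ↦ sum_add_distrib (f := u) (g := v)
  map_smul' a u := funext fun _ ↦ (mul_sum _ u a).symm

open Classical in
lemma pushforward_apply (h : ℬ ⊆ 𝒜) (u : Face 𝒜 → ℝ) (D : Face ℬ) :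
    pushforward h u D = ∑ C with C.restrict h = D, u C := rfl

lemma sum_pushforward_mul (h : ℬ ⊆ 𝒜) (u : Face 𝒜 → ℝ) (φ : Face ℬ → ℝ) :
    ∑ D, pushforward h u D * φ D = ∑ C, u C * φ (C.restrict h) := by
  classical
  simp only [pushforward_apply, sum_mul]
  rw [← sum_fiberwise univ (Face.restrict h)]
  refine sum_congr rfl fun D _ ↦ sum_congr rfl fun C hC ↦ ?_
  rw [(mem_filter.1 hC).2]

theorem pushforward_mulT (h : ℬ ⊆ 𝒜) (u v : Face 𝒜 → ℝ) :
    pushforward h (mulT 𝒜 u v) = mulT ℬ (pushforward h u) (pushforward h v) := by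
  classical
  ext D
  calc pushforward h (mulT 𝒜 u v) D
      = ∑ C, mulT 𝒜 u v C * if C.restrict h = D then 1 else 0 := by
        simp only [pushforward_apply, sum_filter, mul_ite, mul_one, mul_zero]
    _ = ∑ F, u F * ∑ G, v G * if (F.restrict h).mul (G.restrict h) = D then 1 else 0 :=
        sum_mulT_mul u v _
    _ = ∑ F, u F * ∑ G, pushforward h v G * if (F.restrict h).mul G = D then 1 else 0 := by
        simp only [sum_pushforward_mul h v fun G ↦ if Face.mul _ G = D then 1 else 0]
    _ = mulT ℬ (pushforward h u) (pushforward h v) D := by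
        rw [mulT_apply, sum_pushforward_mul h u fun F ↦
          ∑ G, pushforward h v G * if F.mul G = D then 1 else 0]

end TitsAlgebra

section Deletion

variable {𝒜}

open Classical in
/-- The arrangement obtained from `𝒜` by removing the hyperplane `H`. -/
def deletion (H : Idx 𝒜) : Finset (AffForm n) := 𝒜.erase H.1

lemma mem_deletion_iff {H : Idx 𝒜} {ℓ : AffForm n} : ℓ ∈ deletion H ↔ ℓ ≠ H.1 ∧ ℓ ∈ 𝒜 := by
  classical
  exact mem_erase

lemma deletion_ssubset (H : Idx 𝒜) : deletion H ⊂ 𝒜 := by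
  classical
  exact erase_ssubset H.2

lemma deletion_subset (H : Idx 𝒜) : deletion H ⊆ 𝒜 := (deletion_ssubset H).subset

lemma forall_idx_iff (H : Idx 𝒜) {p : Idx 𝒜 → Prop} :
    (∀ ℓ, p ℓ) ↔ (∀ ℓ : Idx (deletion H), p ⟨ℓ.1, deletion_subset H ℓ.2⟩) ∧ p H := by
  refine ⟨fun h ↦ ⟨fun ℓ ↦ h _, h H⟩, fun h ℓ ↦ ?_⟩
  by_cases hℓ : ℓ = H
  · exact hℓ ▸ h.2
  · exact h.1 ⟨ℓ.1, mem_deletion_iff.2 ⟨Subtype.coe_ne_coe.2 hℓ, ℓ.2⟩⟩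

/-- The face of the deletion of `H` containing the face `F`. -/
abbrev Face.delete (H : Idx 𝒜) (F : Face 𝒜) : Face (deletion H) := F.restrict (deletion_subset H)

variable {H : Idx 𝒜}

lemma Face.eq_of_delete_eq {F G : Face 𝒜} (hdel : F.delete H = G.delete H)
    (hsgn : F.sgn H = G.sgn H) : F = G := by
  ext ℓ
  revert ℓ
  exact (forall_idx_iff H).2 ⟨fun ℓ ↦ congr_fun (congr_arg Face.sgn hdel) ℓ, hsgn⟩

lemma Face.mem_carrier_iff_delete {F : Face 𝒜} {x : V n} : x ∈ F.carrier 𝒜 ↔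
    x ∈ (F.delete H).carrier (deletion H) ∧ SignType.sign (H.1 x) = F.sgn H :=
  forall_idx_iff H

lemma Face.mem_recessionCone_iff_delete {F : Face 𝒜} {v : V n} : v ∈ F.recessionCone ↔
    v ∈ (F.delete H).recessionCone ∧ Conforms (H.1.linear v) (F.sgn H) :=
  forall_idx_iff H

lemma Face.mem_directions_iff_delete {F : Face 𝒜} {v : V n} : v ∈ F.directions ↔
    v ∈ (F.delete H).directions ∧ (F.sgn H = 0 → H.1.linear v = 0) := by
  rw [Face.mem_directions_iff, forall_idx_iff H, Face.mem_directions_iff]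
  rfl

lemma dirL_eq_inf_ker (H : Idx 𝒜) : dirL 𝒜 = dirL (deletion H) ⊓ LinearMap.ker H.1.linear := by
  ext v
  rw [Submodule.mem_inf, mem_dirL_iff, mem_dirL_iff, forall_idx_iff H, LinearMap.mem_ker]

lemma dirL_eq_of_le (hker : dirL (deletion H) ≤ LinearMap.ker H.1.linear) :
    dirL 𝒜 = dirL (deletion H) := by
  rw [dirL_eq_inf_ker H, inf_eq_left.2 hker]

end Deletion

section JointInjectivity

variable {𝒜}

/- Two points whose signs differ only at `H` are joined by a segment that meets `H` and keeps all
other signs, so the signs at the hyperplanes can be turned into zeros one after the other. -/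
lemma exists_common_zero_of_exchange {Z : Set (Face 𝒜)} (hne : Z.Nonempty)
    (hZ : ∀ H : Idx 𝒜, ∀ C ∈ Z, ∃ D ∈ Z, C.delete H = D.delete H ∧ C.sgn H ≠ D.sgn H) :
    ∃ x : V n, ∀ ℓ ∈ 𝒜, ℓ x = 0 := by
  classical
  have key : ∀ S : Finset (Idx 𝒜), ∀ C ∈ Z, ∃ x : V n, ∀ ℓ : Idx 𝒜,
      SignType.sign (ℓ.1 x) = if ℓ ∈ S then 0 else C.sgn ℓ := by
    intro S
    induction S using Finset.induction_on with
    | empty => exact fun C _ ↦ C.nonempty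
    | insert H S hH ih =>
      intro C hC
      obtain ⟨D, hD, hdel, hsgn⟩ := hZ H C hC
      obtain ⟨x, hx⟩ := ih C hC
      obtain ⟨y, hy⟩ := ih D hD
      obtain ⟨z, hz, hz0⟩ := exists_mem_segment_apply_eq_zero H.1 (x := x) (y := y) <| by
        rwa [hx, hy, if_neg hH, if_neg hH]
      refine ⟨z, (forall_idx_iff H).2 ⟨fun ℓ ↦ ?_, ?_⟩⟩
      · have hℓ : ℓ.1 ≠ H.1 := (mem_deletion_iff.1 ℓ.2).1
        have hCD : C.sgn ⟨ℓ.1, _⟩ = D.sgn ⟨ℓ.1, _⟩ := congr_fun (congr_arg Face.sgn hdel) ℓ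
        rw [if_congr (mem_insert.trans (or_iff_right fun h ↦ hℓ (congr_arg Subtype.val h))) rfl rfl]
        exact sign_apply_eq_of_mem_segment ℓ.1 (hx ⟨ℓ.1, _⟩) (hCD ▸ hy ⟨ℓ.1, _⟩) hz
      · rw [if_pos (mem_insert_self H S), hz0, sign_zero]
  obtain ⟨C, hC⟩ := hne
  obtain ⟨x, hx⟩ := key univ C hC
  exact ⟨x, fun ℓ hℓ ↦ sign_eq_zero_iff.1 ((hx ⟨ℓ, hℓ⟩).trans (if_pos (mem_univ _)))⟩

lemma exists_ne_zero_of_pushforward_eq_zero {H : Idx 𝒜} {z : Face 𝒜 → ℝ}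
    (hz : pushforward (deletion_subset H) z = 0) {C : Face 𝒜} (hC : z C ≠ 0) :
    ∃ D, z D ≠ 0 ∧ C.delete H = D.delete H ∧ C.sgn H ≠ D.sgn H := by
  classical
  by_contra! hall
  have hsingle : ∑ D with D.delete H = C.delete H, z D = z C := by
    refine sum_eq_single_of_mem C (mem_filter.2 ⟨mem_univ C, rfl⟩) fun D hD hDC ↦ ?_
    by_contra hzD
    have hdel := (mem_filter.1 hD).2.symm
    exact hDC (Face.eq_of_delete_eq hdel (hall D hzD hdel)).symm
  exact hC (hsingle.symm.trans (congr_fun hz (C.delete H)))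

theorem eq_of_forall_pushforward_eq (h𝒜 : ¬ ∃ x : V n, ∀ ℓ ∈ 𝒜, ℓ x = 0) {u v : Face 𝒜 → ℝ}
    (huv : ∀ H : Idx 𝒜,
      pushforward (deletion_subset H) u = pushforward (deletion_subset H) v) : u = v := by
  by_contra hne
  refine h𝒜 (exists_common_zero_of_exchange (Z := Function.support (u - v)) ?_ fun H C hC ↦ ?_)
  · exact Function.support_nonempty_iff.2 (sub_ne_zero.2 hne)
  · refine exists_ne_zero_of_pushforward_eq_zero ?_ hC
    rw [map_sub, huv H, sub_self]

end JointInjectivity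

section TitsUnit

variable {𝒜}

variable (𝒜) in
open Classical in
/-- The element `υ = ∑ (-1) ^ rk F • H_F`, summed over the essentially bounded faces `F`. -/
def titsUnit (F : Face 𝒜) : ℝ := if EssBounded 𝒜 F then (-1) ^ F.rank else 0

lemma titsUnit_of_essBounded {F : Face 𝒜} (hF : EssBounded 𝒜 F) :
    titsUnit 𝒜 F = (-1) ^ F.rank := if_pos hF

lemma titsUnit_of_not_essBounded {F : Face 𝒜} (hF : ¬ EssBounded 𝒜 F) : titsUnit 𝒜 F = 0 :=
  if_neg hF

lemma essBounded_iff_eq_faceAt {x : V n} (hx : ∀ ℓ ∈ 𝒜, ℓ x = 0) (F : Face 𝒜) :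
    EssBounded 𝒜 F ↔ F = faceAt 𝒜 x := by
  rw [essBounded_iff]
  constructor
  · intro hF
    obtain ⟨y, rfl⟩ := exists_faceAt_eq F
    have hval : ∀ ℓ : Idx 𝒜, ℓ.1.linear (y - x) = ℓ.1 y := fun ℓ ↦ by
      rw [apply_sub_eq, hx ℓ.1 ℓ.2, sub_zero]
    have hdir : y - x ∈ dirL 𝒜 := hF fun ℓ ↦ .inr (congr_arg SignType.sign (hval ℓ))
    ext ℓ
    have hy : ℓ.1 y = ℓ.1 x := by
      rw [← hval, mem_dirL_iff.1 hdir ℓ, hx ℓ.1 ℓ.2]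
    exact congr_arg SignType.sign hy
  · rintro rfl v hv
    refine mem_dirL_iff.2 fun ℓ ↦ ?_
    have h0 : (faceAt 𝒜 x).sgn ℓ = 0 := sign_eq_zero_iff.2 (hx ℓ.1 ℓ.2)
    exact (hv ℓ).elim id fun h ↦ sign_eq_zero_iff.1 (h.trans h0)

lemma rank_faceAt {x : V n} (hx : ∀ ℓ ∈ 𝒜, ℓ x = 0) : (faceAt 𝒜 x).rank = 0 := by
  have hdir : (faceAt 𝒜 x).directions = dirL 𝒜 := by
    ext v
    rw [Face.mem_directions_iff, mem_dirL_iff]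
    exact forall_congr' fun ℓ ↦ imp_iff_right (sign_eq_zero_iff.2 (hx ℓ.1 ℓ.2))
  have hrank := (faceAt 𝒜 x).rank_add_finrank_dirL
  rw [hdir] at hrank
  exact Nat.add_eq_right.1 hrank

lemma titsUnit_eq_unitV_faceAt {x : V n} (hx : ∀ ℓ ∈ 𝒜, ℓ x = 0) :
    titsUnit 𝒜 = unitV 𝒜 (faceAt 𝒜 x) := by
  ext F
  by_cases hF : F = faceAt 𝒜 x
  · rw [titsUnit_of_essBounded ((essBounded_iff_eq_faceAt hx F).2 hF), hF, rank_faceAt hx,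
      pow_zero, unitV, if_pos rfl]
  · rw [titsUnit_of_not_essBounded (mt (essBounded_iff_eq_faceAt hx F).1 hF), unitV, if_neg hF]

end TitsUnit

section Uncut

variable {𝒜} {H : Idx 𝒜}

lemma Face.dirL_deletion_le_ker {D : Face (deletion H)} {s : SignType}
    (hs : ∀ x ∈ D.carrier (deletion H), SignType.sign (H.1 x) = s) :
    dirL (deletion H) ≤ LinearMap.ker H.1.linear := by
  intro v hv
  by_contra hHv
  obtain ⟨x, hx⟩ := D.nonempty
  have hval : ∀ a : ℝ, SignType.sign a = s := fun a ↦ by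
    let t := (a - H.1 x) / H.1.linear v
    have ht : H.1 (x + t • v) = a := by
      rw [apply_add_smul, div_mul_cancel₀ _ hHv, add_sub_cancel]
    rw [← ht]
    exact hs _ (Face.add_mem_carrier hx
      (D.dirL_subset_recessionCone (Submodule.smul_mem _ t hv)))
  have h01 : SignType.sign (0 : ℝ) = SignType.sign (1 : ℝ) := (hval 0).trans (hval 1).symm
  simp at h01

lemma titsUnit_congr {ℬ : Finset (AffForm n)} {C : Face 𝒜} {D : Face ℬ}
    (hcarrier : C.carrier 𝒜 = D.carrier ℬ) (hdirL : dirL 𝒜 = dirL ℬ) :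
    titsUnit 𝒜 C = titsUnit ℬ D := by
  rw [titsUnit, titsUnit, EssBounded, EssBounded, Face.rank, Face.rank, hcarrier, hdirL]

lemma pushforward_titsUnit_apply_of_uncut {D : Face (deletion H)} {s : SignType}
    (hs : ∀ x ∈ D.carrier (deletion H), SignType.sign (H.1 x) = s) :
    pushforward (deletion_subset H) (titsUnit 𝒜) D = titsUnit (deletion H) D := by
  classical
  obtain ⟨x, hx⟩ := exists_faceAt_eq D
  have hsgn : ∀ C : Face 𝒜, C.delete H = D → C.sgn H = s := by
    rintro C rfl
    obtain ⟨y, hy⟩ := C.nonempty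
    exact (hy H).symm.trans (hs y (Face.mem_carrier_iff_delete.1 hy).1)
  have hC : (faceAt 𝒜 x).delete H = D := hx
  rw [pushforward_apply, sum_eq_single_of_mem (faceAt 𝒜 x) (mem_filter.2 ⟨mem_univ _, hC⟩)]
  · refine titsUnit_congr (Set.ext fun y ↦ ?_) ?_
    · rw [Face.mem_carrier_iff_delete (H := H), hC, hsgn _ hC, and_iff_left_of_imp (hs y)]
    · exact dirL_eq_of_le (Face.dirL_deletion_le_ker hs)
  · intro C hmem hne
    have hdel := (mem_filter.1 hmem).2
    exact absurd (Face.eq_of_delete_eq (hdel.trans hC.symm)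
      ((hsgn C hdel).trans (hsgn _ hC).symm)) hne

end Uncut

section Cut

open Filter Topology

variable {𝒜} {H : Idx 𝒜}

lemma Face.exists_mem_carrier_sign_eq {D : Face 𝒜} (f : AffForm n) {x y : V n}
    (hx : x ∈ D.carrier 𝒜) (hy : y ∈ D.carrier 𝒜)
    (hxy : SignType.sign (f x) ≠ SignType.sign (f y)) (s : SignType) :
    ∃ z ∈ D.carrier 𝒜, SignType.sign (f z) = s := by
  obtain ⟨p, hp, hp0⟩ := exists_mem_segment_apply_eq_zero f hxy
  have hpD : p ∈ D.carrier 𝒜 := D.convex_carrier.segment_subset hx hy hp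
  have hf : f.linear (x - y) ≠ 0 := fun h ↦ hxy <| by
    rw [sub_eq_zero.1 ((apply_sub_eq f x y).symm.trans h)]
  let w := ((s : ℝ) / f.linear (x - y)) • (x - y)
  have hfw : f.linear w = s := by
    rw [map_smul, smul_eq_mul, div_mul_cancel₀ _ hf]
  have hw : w ∈ D.directions := Submodule.smul_mem _ _ (Face.sub_mem_directions hx hy)
  have hstep : ∀ᶠ t in 𝓝[>] (0 : ℝ), p + t • w ∈ D.carrier 𝒜 :=
    nhdsWithin_le_nhds (Face.eventually_add_smul_mem_carrier hpD hw)
  obtain ⟨t, ht, htpos⟩ := (hstep.and self_mem_nhdsWithin).exists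
  refine ⟨p + t • w, ht, ?_⟩
  rw [apply_add_smul, hp0, zero_add, hfw, sign_mul, sign_pos htpos, one_mul]
  cases s <;> simp

/-- The hyperplane `H` cuts the face `D` of the deletion into the three faces `F s` of `𝒜`,
where `s` is the sign at `H`. -/
structure IsCut (H : Idx 𝒜) (D : Face (deletion H)) (F : SignType → Face 𝒜) : Prop where
  delete (s : SignType) : (F s).delete H = D
  sgn (s : SignType) : (F s).sgn H = s

lemma exists_isCut {D : Face (deletion H)} {x y : V n} (hx : x ∈ D.carrier (deletion H))
    (hy : y ∈ D.carrier (deletion H)) (hxy : SignType.sign (H.1 x) ≠ SignType.sign (H.1 y)) :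
    ∃ F, IsCut H D F := by
  choose z hz hsgn using Face.exists_mem_carrier_sign_eq H.1 hx hy hxy
  exact ⟨fun s ↦ faceAt 𝒜 (z s), fun s ↦ mem_carrier_iff.1 (hz s), hsgn⟩

namespace IsCut

variable {D : Face (deletion H)} {F : SignType → Face 𝒜} (hF : IsCut H D F)
include hF

lemma pushforward_apply_eq (u : Face 𝒜 → ℝ) :
    pushforward (deletion_subset H) u D = u (F 0) + u (F (-1)) + u (F 1) := by
  classical
  have hfibre : ∑ s, u (F s) = pushforward (deletion_subset H) u D := by
    refine sum_nbij F (fun s _ ↦ mem_filter.2 ⟨mem_univ _, hF.delete s⟩) ?_ ?_ fun s _ ↦ rfl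
    · intro s _ t _ hst
      rw [← hF.sgn s, hst, hF.sgn t]
    · intro C hC
      have hdel := (mem_filter.1 hC).2
      exact ⟨C.sgn H, mem_coe.2 (mem_univ _),
        Face.eq_of_delete_eq ((hF.delete _).trans hdel.symm) (hF.sgn _)⟩
  rw [← hfibre, SignType.univ_eq]
  simp [add_assoc]

lemma mem_recessionCone_iff {s : SignType} {v : V n} :
    v ∈ (F s).recessionCone ↔ v ∈ D.recessionCone ∧ Conforms (H.1.linear v) s := by
  rw [Face.mem_recessionCone_iff_delete (H := H), hF.delete, hF.sgn]

lemma directions_of_ne_zero {s : SignType} (hs : s ≠ 0) : (F s).directions = D.directions := by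
  ext v
  rw [Face.mem_directions_iff_delete (H := H), hF.delete, hF.sgn, and_iff_left fun h ↦ absurd h hs]

lemma directions_zero : (F 0).directions = D.directions ⊓ LinearMap.ker H.1.linear := by
  ext v
  rw [Face.mem_directions_iff_delete (H := H), hF.delete, hF.sgn, imp_iff_right rfl,
    Submodule.mem_inf, LinearMap.mem_ker]

lemma not_directions_le_ker : ¬ D.directions ≤ LinearMap.ker H.1.linear := by
  intro hle
  have hmem (s : SignType) : ∃ x ∈ D.carrier (deletion H), SignType.sign (H.1 x) = s := by
    obtain ⟨x, hx⟩ := (F s).nonempty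
    obtain ⟨hxD, hxs⟩ := (Face.mem_carrier_iff_delete (H := H)).1 hx
    exact ⟨x, hF.delete s ▸ hxD, hxs.trans (hF.sgn s)⟩
  obtain ⟨x, hx, hx0⟩ := hmem 0
  obtain ⟨y, hy, hy1⟩ := hmem 1
  have hxy : H.1 x = H.1 y := sub_eq_zero.1 <| by
    rw [← apply_sub_eq]
    exact hle (Face.sub_mem_directions hx hy)
  exact absurd (hx0.symm.trans (hxy ▸ hy1)) (by decide)

lemma finrank_directions_zero_add_one :
    Module.finrank ℝ (F 0).directions + 1 = Module.finrank ℝ D.directions := by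
  rw [hF.directions_zero]
  exact finrank_inf_ker_add_one _ _ hF.not_directions_le_ker

section InessentialCut

variable (hker : ¬ dirL (deletion H) ≤ LinearMap.ker H.1.linear)
include hker

lemma rank_zero_of_not_le : (F 0).rank = D.rank := by
  have hdirL := finrank_inf_ker_add_one (dirL (deletion H)) H.1.linear hker
  rw [← dirL_eq_inf_ker] at hdirL
  have h0 := (F 0).rank_add_finrank_dirL
  have hD := D.rank_add_finrank_dirL
  have hdir := hF.finrank_directions_zero_add_one
  lia

lemma not_essBounded_of_not_le {s : SignType} (hs : s ≠ 0) : ¬ EssBounded 𝒜 (F s) := by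
  obtain ⟨w, hw, hHw⟩ := Set.not_subset.1 hker
  let v := ((s : ℝ) / H.1.linear w) • w
  have hHv : H.1.linear v = s := by
    rw [map_smul, smul_eq_mul, div_mul_cancel₀ _ hHw]
  have hv : v ∈ dirL (deletion H) := Submodule.smul_mem _ _ hw
  rw [essBounded_iff]
  intro hsub
  have hv0 := mem_dirL_iff.1 (hsub (hF.mem_recessionCone_iff.2
    ⟨D.dirL_subset_recessionCone hv, .inr (by rw [hHv]; cases s <;> simp)⟩)) H
  rw [hHv] at hv0
  revert hv0
  cases s <;> simp_all

lemma essBounded_zero_iff_of_not_le :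
    EssBounded 𝒜 (F 0) ↔ EssBounded (deletion H) D := by
  rw [essBounded_iff, essBounded_iff]
  constructor
  · intro h0 v hv
    obtain ⟨w, hw, hHw⟩ := Set.not_subset.1 hker
    let c := -(H.1.linear v / H.1.linear w)
    have hcw : c • w ∈ dirL (deletion H) := Submodule.smul_mem _ c hw
    have hH : H.1.linear (v + c • w) = 0 := by
      rw [map_add, map_smul, smul_eq_mul, neg_mul, div_mul_cancel₀ _ hHw, add_neg_cancel]
    have hmem := h0 (hF.mem_recessionCone_iff.2
      ⟨Face.add_mem_recessionCone hv (D.dirL_subset_recessionCone hcw), .inl hH⟩)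
    rw [dirL_eq_inf_ker H] at hmem
    exact (Submodule.add_mem_iff_left _ hcw).1 hmem.1
  · intro hD v hv
    obtain ⟨hvD, hH⟩ := hF.mem_recessionCone_iff.1 hv
    rw [dirL_eq_inf_ker H]
    exact ⟨hD hvD, hH.elim id sign_eq_zero_iff.1⟩

lemma pushforward_titsUnit_apply_of_not_le :
    pushforward (deletion_subset H) (titsUnit 𝒜) D = titsUnit (deletion H) D := by
  classical
  rw [hF.pushforward_apply_eq,
    titsUnit_of_not_essBounded (hF.not_essBounded_of_not_le hker (s := -1) (by decide)),
    titsUnit_of_not_essBounded (hF.not_essBounded_of_not_le hker (s := 1) (by decide)),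
    add_zero, add_zero, titsUnit, titsUnit, hF.rank_zero_of_not_le hker,
    if_congr (hF.essBounded_zero_iff_of_not_le hker) rfl rfl]

end InessentialCut

section EssentialCut

variable (hker : dirL (deletion H) ≤ LinearMap.ker H.1.linear)
include hker

lemma rank_of_ne_zero {s : SignType} (hs : s ≠ 0) : (F s).rank = D.rank := by
  have hrank := (F s).rank_add_finrank_dirL
  rwa [hF.directions_of_ne_zero hs, ← D.rank_add_finrank_dirL, dirL_eq_of_le hker,
    Nat.add_right_cancel_iff] at hrank

lemma rank_zero_add_one : (F 0).rank + 1 = D.rank := by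
  have h0 := (F 0).rank_add_finrank_dirL
  have hD := D.rank_add_finrank_dirL
  have hdir := hF.finrank_directions_zero_add_one
  rw [dirL_eq_of_le hker] at h0
  lia

lemma essBounded_iff_sides :
    EssBounded (deletion H) D ↔ EssBounded 𝒜 (F (-1)) ∧ EssBounded 𝒜 (F 1) := by
  simp only [essBounded_iff, ← dirL_eq_of_le hker]
  constructor
  · exact fun hD ↦ ⟨fun v hv ↦ hD (hF.mem_recessionCone_iff.1 hv).1,
      fun v hv ↦ hD (hF.mem_recessionCone_iff.1 hv).1⟩
  · rintro ⟨hneg, hpos⟩ v hv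
    rcases lt_trichotomy (H.1.linear v) 0 with h | h | h
    · exact hneg (hF.mem_recessionCone_iff.2 ⟨hv, .inr (sign_neg h)⟩)
    · exact hpos (hF.mem_recessionCone_iff.2 ⟨hv, .inl h⟩)
    · exact hpos (hF.mem_recessionCone_iff.2 ⟨hv, .inr (sign_pos h)⟩)

lemma essBounded_zero_iff_sides :
    EssBounded 𝒜 (F 0) ↔ EssBounded 𝒜 (F (-1)) ∨ EssBounded 𝒜 (F 1) := by
  simp only [essBounded_iff]
  constructor
  · intro h0
    by_contra! hunbdd
    obtain ⟨u, hu, huL⟩ := Set.not_subset.1 hunbdd.1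
    obtain ⟨w, hw, hwL⟩ := Set.not_subset.1 hunbdd.2
    obtain ⟨huD, hHu⟩ := hF.mem_recessionCone_iff.1 hu
    obtain ⟨hwD, hHw⟩ := hF.mem_recessionCone_iff.1 hw
    have hu_neg : H.1.linear u < 0 := sign_eq_neg_one_iff.1 <| hHu.resolve_left fun h ↦
      huL (h0 (hF.mem_recessionCone_iff.2 ⟨huD, .inl h⟩))
    have hw_pos : 0 < H.1.linear w := sign_eq_one_iff.1 <| hHw.resolve_left fun h ↦
      hwL (h0 (hF.mem_recessionCone_iff.2 ⟨hwD, .inl h⟩))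
    -- The positive combination of `u` and `w` in the direction of `H` is a recession direction.
    have hu' := Face.smul_mem_recessionCone huD hw_pos.le
    have hw' := Face.smul_mem_recessionCone hwD (neg_pos.2 hu_neg).le
    have hsum : H.1.linear w • u + -H.1.linear u • w ∈ dirL 𝒜 :=
      h0 (hF.mem_recessionCone_iff.2 ⟨Face.add_mem_recessionCone hu' hw', .inl <| by
        simp only [map_add, map_smul, smul_eq_mul]
        ring⟩)
    rw [dirL_eq_of_le hker] at hsum huL
    exact huL ((Submodule.smul_mem_iff _ hw_pos.ne').1
      (Face.mem_dirL_of_add_mem_dirL hu' hw' hsum))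
  · have hzero : ∀ s, (F 0).recessionCone ⊆ (F s).recessionCone := fun s v hv ↦ by
      obtain ⟨hvD, hH⟩ := hF.mem_recessionCone_iff.1 hv
      exact hF.mem_recessionCone_iff.2 ⟨hvD, .inl (hH.elim id sign_eq_zero_iff.1)⟩
    exact fun h ↦ h.elim (hzero (-1)).trans (hzero 1).trans

lemma pushforward_titsUnit_apply_of_le :
    pushforward (deletion_subset H) (titsUnit 𝒜) D = titsUnit (deletion H) D := by
  classical
  rw [hF.pushforward_apply_eq]
  simp only [titsUnit, hF.essBounded_zero_iff_sides hker, hF.essBounded_iff_sides hker,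
    hF.rank_of_ne_zero hker (s := -1) (by decide), hF.rank_of_ne_zero hker (s := 1) (by decide),
    ← hF.rank_zero_add_one hker, pow_succ]
  by_cases hneg : EssBounded 𝒜 (F (-1)) <;> by_cases hpos : EssBounded 𝒜 (F 1) <;>
    simp [hneg, hpos]

end EssentialCut

end IsCut

end Cut

section Unit

variable {𝒜} in
theorem pushforward_titsUnit (H : Idx 𝒜) :
    pushforward (deletion_subset H) (titsUnit 𝒜) = titsUnit (deletion H) := by
  ext D
  by_cases hcut : ∃ x ∈ D.carrier (deletion H), ∃ y ∈ D.carrier (deletion H),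
      SignType.sign (H.1 x) ≠ SignType.sign (H.1 y)
  · obtain ⟨x, hx, y, hy, hxy⟩ := hcut
    obtain ⟨F, hF⟩ := exists_isCut hx hy hxy
    by_cases hker : dirL (deletion H) ≤ LinearMap.ker H.1.linear
    · exact hF.pushforward_titsUnit_apply_of_le hker
    · exact hF.pushforward_titsUnit_apply_of_not_le hker
  · push Not at hcut
    obtain ⟨x, hx⟩ := D.nonempty
    exact pushforward_titsUnit_apply_of_uncut fun y hy ↦ hcut y hy x hx

theorem titsUnit_mulT_and_mulT_titsUnit (u : Face 𝒜 → ℝ) :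
    mulT 𝒜 (titsUnit 𝒜) u = u ∧ mulT 𝒜 u (titsUnit 𝒜) = u := by
  induction 𝒜 using Finset.strongInduction with
  | H 𝒜 ih =>
    by_cases hcentral : ∃ x : V n, ∀ ℓ ∈ 𝒜, ℓ x = 0
    · obtain ⟨x, hx⟩ := hcentral
      rw [titsUnit_eq_unitV_faceAt hx]
      exact ⟨unitV_faceAt_mulT hx u, mulT_unitV_faceAt hx u⟩
    · refine ⟨eq_of_forall_pushforward_eq hcentral fun H ↦ ?_,
        eq_of_forall_pushforward_eq hcentral fun H ↦ ?_⟩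
      · rw [pushforward_mulT, pushforward_titsUnit]
        exact (ih _ (deletion_ssubset H) _).1
      · rw [pushforward_mulT, pushforward_titsUnit]
        exact (ih _ (deletion_ssubset H) _).2

end Unit

open Classical in
/-- **Theorem (the Tits algebra of an affine arrangement is unital).**
The element `υ = Σ_F (-1)^{rk F} H_F`, with `F` running over the essentially bounded
faces, satisfies `υ · H_G = H_G = H_G · υ` for every face `G`.  Here `rk F = dim F - d`
where `d = dim L` and `L = ⋂_{H ∈ 𝒜} dir H`. -/
theorem unit_of_titsAlgebra {n : ℕ} (𝒜 : Finset (AffForm n))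
    (h𝒜 : ∀ ℓ ∈ 𝒜, ℓ.linear ≠ 0)
    (υ : Face 𝒜 → ℝ)
    (hυ : υ = fun F => if EssBounded 𝒜 F then
      (-1 : ℝ) ^ (dimS (Face.carrier 𝒜 F) - Module.finrank ℝ (dirL 𝒜)) else 0) :
    ∀ G : Face 𝒜, mulT 𝒜 υ (unitV 𝒜 G) = unitV 𝒜 G ∧ mulT 𝒜 (unitV 𝒜 G) υ = unitV 𝒜 G := by
  subst hυ
  exact fun G ↦ titsUnit_mulT_and_mulT_titsUnit 𝒜 (unitV 𝒜 G)

end CharElts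
end
end

section
/- The unit element υ = Σ_F (−1)^{rk(F)} H_F of the Tits algebra ℝΣ[𝒜] (sum over essentially bounded faces F) is characteristic of parameter 1; that is, for every flat X of 𝒜, Σ (−1)^{rk(F)} = 1, where the sum is over all essentially bounded faces F with supp(F) ⊆ X. -/
open Finset MeasureTheory

noncomputable section

namespace CharElts

variable {n : ℕ} (𝒜 : Finset (AffForm n))

/-!
The map `x ↦ (ℓ x)_ℓ` kills precisely the directions common to all hyperplanes, so a face is
essentially bounded iff its image is bounded, and one may assume that the arrangement is essential.
Give a nonempty bounded set `C` the weight `(-1) ^ dim C` and every other set the weight `0`.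
Cutting a relatively open convex set without lines by a hyperplane preserves the total weight. Pick
a vertex `p` of the arrangement restricted to the flat and undo the cuts by all hyperplanes missing
`p`: what remains are cones with apex `p`, and the only bounded one is `{p}`, of weight `1`.
-/

section UnitElement

open Filter Topology Bornology Module

section RelOpenConvex

variable {E : Type*} [NormedAddCommGroup E] [NormedSpace ℝ E]

/-- A relatively open convex set, encoded as the trace on an affine subspace of an open convex set.
Faces of an arrangement, and their pieces after further cuts, are of this kind. -/
def IsRelOpenConvex (C : Set E) : Prop :=
  ∃ (U : Set E) (A : AffineSubspace ℝ E), IsOpen U ∧ Convex ℝ U ∧ C = U ∩ A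

namespace IsRelOpenConvex

lemma of_isOpen {U : Set E} (hU : IsOpen U) (hconv : Convex ℝ U) : IsRelOpenConvex U :=
  ⟨U, ⊤, hU, hconv, by simp⟩

lemma of_affineSubspace (A : AffineSubspace ℝ E) : IsRelOpenConvex (A : Set E) :=
  ⟨Set.univ, A, isOpen_univ, convex_univ, by simp⟩

lemma inter {C D : Set E} (hC : IsRelOpenConvex C) (hD : IsRelOpenConvex D) :
    IsRelOpenConvex (C ∩ D) := by
  obtain ⟨U, A, hU, hUc, rfl⟩ := hC
  obtain ⟨U', A', hU', hUc', rfl⟩ := hD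
  exact ⟨U ∩ U', A ⊓ A', hU.inter hU', hUc.inter hUc',
    Set.inter_inter_inter_comm U A U' A'⟩

lemma iInter {κ : Type*} [Finite κ] {C : κ → Set E} (hC : ∀ k, IsRelOpenConvex (C k)) :
    IsRelOpenConvex (⋂ k, C k) := by
  choose U A hU hUc hC using hC
  exact ⟨⋂ k, U k, ⨅ k, A k, isOpen_iInter_of_finite hU, convex_iInter hUc, by
    simp only [hC, AffineSubspace.coe_iInf, Set.iInter_inter_distrib]⟩

variable {C : Set E} {x v : E}

lemma convex (hC : IsRelOpenConvex C) : Convex ℝ C := by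
  obtain ⟨U, A, -, hUc, rfl⟩ := hC
  exact hUc.inter A.convex

lemma eventually_add_smul_mem (hC : IsRelOpenConvex C) (hx : x ∈ C) (hv : v ∈ vectorSpan ℝ C) :
    ∀ᶠ t : ℝ in 𝓝 0, x + t • v ∈ C := by
  obtain ⟨U, A, hU, -, rfl⟩ := hC
  have hvA : v ∈ A.direction := by
    rw [AffineSubspace.direction_eq_vectorSpan]
    exact vectorSpan_mono ℝ Set.inter_subset_right hv
  have hline : Tendsto (fun t : ℝ ↦ x + t • v) (𝓝 0) (𝓝 x) :=
    Continuous.tendsto' (by fun_prop) _ _ (by simp)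
  filter_upwards [hline.eventually (hU.mem_nhds hx.1)] with t ht
  refine ⟨ht, ?_⟩
  rw [add_comm]
  exact AffineSubspace.vadd_mem_of_mem_direction (A.direction.smul_mem t hvA) hx.2

lemma add_smul_mem_of_mem_asymptoticCone [FiniteDimensional ℝ E] (hC : IsRelOpenConvex C)
    (hx : x ∈ C) (hv : v ∈ asymptoticCone ℝ C) {t : ℝ} (ht : 0 ≤ t) : x + t • v ∈ C := by
  obtain ⟨U, A, hU, hUc, rfl⟩ := hC
  have hvA : v ∈ A.direction := by
    have := asymptoticCone_mono Set.inter_subset_right hv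
    rwa [asymptoticCone_affineSubspace ⟨x, hx.2⟩,
      A.direction.closed_of_finiteDimensional.closure_eq] at this
  rw [add_comm]
  exact ⟨hUc.smul_vadd_mem_of_mem_nhds_of_mem_asymptoticCone ht (hU.mem_nhds hx.1)
      (asymptoticCone_mono Set.inter_subset_left hv),
    AffineSubspace.vadd_mem_of_mem_direction (A.direction.smul_mem t hvA) hx.2⟩

end IsRelOpenConvex

lemma mem_asymptoticCone_of_ray {S : Set E} {x v : E} (h : ∀ t : ℝ, 0 ≤ t → x + t • v ∈ S) :
    v ∈ asymptoticCone ℝ S := by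
  refine ((tendsto_id.atTop_smul_const_tendsto_asymptoticNhds v).asymptoticNhds_vadd_const
    x).frequently (Eventually.frequently ?_)
  filter_upwards [eventually_ge_atTop 0] with t ht
  rw [id, vadd_eq_add, add_comm]
  exact h t ht

lemma vectorSpan_eq_of_eventually_add_smul_mem {S : Set E} {W : Submodule ℝ E} {x : E}
    (hxS : x ∈ S) (hSW : ∀ y ∈ S, y - x ∈ W)
    (hWS : ∀ v ∈ W, ∀ᶠ t : ℝ in 𝓝 0, x + t • v ∈ S) : vectorSpan ℝ S = W := by
  refine le_antisymm ?_ fun v hv ↦ ?_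
  · rw [vectorSpan_eq_span_vsub_set_right ℝ hxS, Submodule.span_le]
    rintro _ ⟨y, hy, rfl⟩
    exact hSW y hy
  · have hpos : ∀ᶠ t : ℝ in 𝓝[≠] 0, x + t • v ∈ S ∧ t ≠ 0 :=
      ((hWS v hv).filter_mono nhdsWithin_le_nhds).and self_mem_nhdsWithin
    obtain ⟨t, ht, ht0⟩ := hpos.exists
    rw [← Submodule.smul_mem_iff _ ht0, ← add_sub_cancel_left x (t • v)]
    exact vsub_mem_vectorSpan ℝ ht hxS

lemma IsRelOpenConvex.vectorSpan_inter_of_isOpen {C O : Set E} (hC : IsRelOpenConvex C)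
    (hO : IsOpen O) (hne : (C ∩ O).Nonempty) : vectorSpan ℝ (C ∩ O) = vectorSpan ℝ C := by
  obtain ⟨x, hx⟩ := hne
  refine vectorSpan_eq_of_eventually_add_smul_mem hx
    (fun y hy ↦ vsub_mem_vectorSpan ℝ hy.1 hx.1) fun v hv ↦ ?_
  have hline : Tendsto (fun t : ℝ ↦ x + t • v) (𝓝 0) (𝓝 x) :=
    Continuous.tendsto' (by fun_prop) _ _ (by simp)
  exact (hC.eventually_add_smul_mem hx.1 hv).and (hline.eventually (hO.mem_nhds hx.2))

end RelOpenConvex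

section SignLocus

variable {E : Type*} [AddCommGroup E] [Module ℝ E] {φ : E →ᵃ[ℝ] ℝ} {x : E}

/-- The set where an affine functional has a prescribed sign: a hyperplane or one of the two open
half-spaces it bounds. -/
def signLocus (φ : E →ᵃ[ℝ] ℝ) (s : SignType) : Set E := {x | SignType.sign (φ x) = s}

/-- The zero set of an affine functional as an affine subspace: a hyperplane, or everything or
nothing when the functional is constant. -/
def zeroSubspace (φ : E →ᵃ[ℝ] ℝ) : AffineSubspace ℝ E :=
  (⊥ : Submodule ℝ ℝ).toAffineSubspace.comap φ

/-- The set cut out by a sign vector for a family of affine functionals. -/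
def signCell {κ : Type*} (φ : κ → E →ᵃ[ℝ] ℝ) (τ : κ → SignType) : Set E :=
  ⋂ k, signLocus (φ k) (τ k)

lemma mem_signLocus_sign (φ : E →ᵃ[ℝ] ℝ) (x : E) : x ∈ signLocus φ (SignType.sign (φ x)) := rfl

lemma signLocus_zero (φ : E →ᵃ[ℝ] ℝ) : signLocus φ 0 = zeroSubspace φ :=
  Set.ext fun _ ↦ sign_eq_zero_iff

lemma signLocus_one (φ : E →ᵃ[ℝ] ℝ) : signLocus φ 1 = φ ⁻¹' Set.Ioi 0 :=
  Set.ext fun _ ↦ sign_eq_one_iff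

lemma signLocus_neg_one (φ : E →ᵃ[ℝ] ℝ) : signLocus φ (-1) = φ ⁻¹' Set.Iio 0 :=
  Set.ext fun _ ↦ sign_eq_neg_one_iff

lemma mem_signLocus_zero : x ∈ signLocus φ 0 ↔ φ x = 0 := sign_eq_zero_iff

lemma signCell_comp_equiv {α β : Type*} (e : α ≃ β) (φ : β → E →ᵃ[ℝ] ℝ) (τ : β → SignType) :
    signCell (φ ∘ e) (τ ∘ e) = signCell φ τ :=
  e.surjective.iInter_comp fun k ↦ signLocus (φ k) (τ k)

lemma signCell_eq_inter {κ : Type*} (P : κ → Prop) (φ : κ → E →ᵃ[ℝ] ℝ) (τ : κ → SignType) :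
    signCell φ τ = signCell (fun k : {k // P k} ↦ φ k) (fun k ↦ τ k) ∩
      signCell (fun k : {k // ¬P k} ↦ φ k) (fun k ↦ τ k) := by
  ext x
  simp only [signCell, Set.mem_inter_iff, Set.mem_iInter, Subtype.forall]
  exact ⟨fun h ↦ ⟨fun k _ ↦ h k, fun k _ ↦ h k⟩, fun h k ↦ (em (P k)).elim (h.1 k) (h.2 k)⟩

lemma linear_sub {F : Type*} [AddCommGroup F] [Module ℝ F] (φ : E →ᵃ[ℝ] F) (x y : E) :
    φ.linear (x - y) = φ x - φ y :=
  φ.linearMap_vsub x y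

lemma map_add_smul (φ : E →ᵃ[ℝ] ℝ) (x v : E) (t : ℝ) : φ (x + t • v) = φ x + t * φ.linear v := by
  rw [add_comm x, ← vadd_eq_add, φ.map_vadd, map_smul, vadd_eq_add, smul_eq_mul, add_comm]

lemma convex_signLocus (φ : E →ᵃ[ℝ] ℝ) (s : SignType) : Convex ℝ (signLocus φ s) := by
  cases s with
  | zero => exact (signLocus_zero φ).symm ▸ (zeroSubspace φ).convex
  | neg => exact (signLocus_neg_one φ).symm ▸ (convex_Iio 0).affine_preimage φ
  | pos => exact (signLocus_one φ).symm ▸ (convex_Ioi 0).affine_preimage φ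

lemma finrank_inf_ker_add_one_s4 [FiniteDimensional ℝ E] {f : E →ₗ[ℝ] ℝ} {W : Submodule ℝ E}
    {v : E} (hv : v ∈ W) (hfv : f v ≠ 0) :
    finrank ℝ ↥(W ⊓ LinearMap.ker f) + 1 = finrank ℝ W := by
  have hf : f ∘ₗ W.subtype ≠ 0 := fun h ↦ hfv (LinearMap.congr_fun h ⟨v, hv⟩)
  rw [← Module.Dual.finrank_ker_add_one_of_ne_zero (f := f ∘ₗ W.subtype) hf,
    ← Submodule.map_comap_subtype, LinearMap.ker_comp, Submodule.finrank_map_subtype_eq]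

end SignLocus

section RelOpenSignCell

variable {E : Type*} [NormedAddCommGroup E] [NormedSpace ℝ E] {φ : E →ᵃ[ℝ] ℝ} {C : Set E} {x : E}

lemma vectorSpan_inter_signLocus_zero (hC : IsRelOpenConvex C) (hx : x ∈ C ∩ signLocus φ 0) :
    vectorSpan ℝ (C ∩ signLocus φ 0) = vectorSpan ℝ C ⊓ LinearMap.ker φ.linear := by
  have hφx : φ x = 0 := mem_signLocus_zero.mp hx.2
  refine vectorSpan_eq_of_eventually_add_smul_mem hx (fun y hy ↦ ?_) fun v hv ↦ ?_
  · refine ⟨vsub_mem_vectorSpan ℝ hy.1 hx.1, ?_⟩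
    rw [SetLike.mem_coe, LinearMap.mem_ker, linear_sub, mem_signLocus_zero.mp hy.2, hφx, sub_zero]
  · filter_upwards [hC.eventually_add_smul_mem hx.1 hv.1] with t ht
    refine ⟨ht, mem_signLocus_zero.mpr ?_⟩
    rw [map_add_smul, hφx, LinearMap.mem_ker.mp hv.2, mul_zero, add_zero]

variable [FiniteDimensional ℝ E]

lemma isOpen_signLocus {s : SignType} (hs : s ≠ 0) : IsOpen (signLocus φ s) := by
  have hφ : Continuous φ := φ.continuous_of_finiteDimensional
  cases s with
  | zero => exact absurd rfl hs
  | neg => exact (signLocus_neg_one φ).symm ▸ isOpen_Iio.preimage hφ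
  | pos => exact (signLocus_one φ).symm ▸ isOpen_Ioi.preimage hφ

lemma isRelOpenConvex_signLocus (φ : E →ᵃ[ℝ] ℝ) (s : SignType) :
    IsRelOpenConvex (signLocus φ s) := by
  by_cases hs : s = 0
  · rw [hs, signLocus_zero]
    exact .of_affineSubspace _
  · exact .of_isOpen (isOpen_signLocus hs) (convex_signLocus φ s)

lemma isRelOpenConvex_signCell {κ : Type*} [Finite κ] (φ : κ → E →ᵃ[ℝ] ℝ) (τ : κ → SignType) :
    IsRelOpenConvex (signCell φ τ) :=
  .iInter fun k ↦ isRelOpenConvex_signLocus (φ k) (τ k)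

lemma finrank_vectorSpan_inter_signLocus (hC : IsRelOpenConvex C) {s : SignType} (hs : s ≠ 0)
    (hne : (C ∩ signLocus φ s).Nonempty) :
    finrank ℝ (vectorSpan ℝ (C ∩ signLocus φ s)) = finrank ℝ (vectorSpan ℝ C) := by
  rw [hC.vectorSpan_inter_of_isOpen (isOpen_signLocus hs) hne]

lemma finrank_vectorSpan_inter_signLocus_zero_add_one {y : E} (hC : IsRelOpenConvex C)
    (hx : x ∈ C ∩ signLocus φ 0) (hy : y ∈ C) (hφy : φ y ≠ 0) :
    finrank ℝ (vectorSpan ℝ (C ∩ signLocus φ 0)) + 1 = finrank ℝ (vectorSpan ℝ C) := by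
  rw [vectorSpan_inter_signLocus_zero hC hx]
  refine finrank_inf_ker_add_one_s4 (vsub_mem_vectorSpan ℝ hy hx.1) ?_
  rwa [vsub_eq_sub, linear_sub, mem_signLocus_zero.mp hx.2, sub_zero]

end RelOpenSignCell

section AsymptoticDirections

variable {E : Type*} [NormedAddCommGroup E] [NormedSpace ℝ E] {C : Set E} {u v : E}

lemma add_mem_asymptoticCone (hC : Convex ℝ C) (hu : u ∈ asymptoticCone ℝ C)
    (hv : v ∈ asymptoticCone ℝ C) : u + v ∈ asymptoticCone ℝ C := by
  rw [← smul_mem_asymptoticCone_iff (k := ℝ) (c := 1 / 2) one_half_pos, smul_add]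
  exact hC.asymptoticCone hu hv one_half_pos.le one_half_pos.le (add_halves 1)

/-- A set is line-free if no nonzero vector is an asymptotic direction of it together with its
opposite; for a closed convex set this says that it contains no line. -/
def LineFree (C : Set E) : Prop :=
  ∀ v ∈ asymptoticCone ℝ C, -v ∈ asymptoticCone ℝ C → v = 0

lemma LineFree.mono {D : Set E} (hC : LineFree C) (hDC : D ⊆ C) : LineFree D :=
  fun v hv hv' ↦ hC v (asymptoticCone_mono hDC hv) (asymptoticCone_mono hDC hv')

variable [FiniteDimensional ℝ E] {φ : E →ᵃ[ℝ] ℝ} {s : SignType}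

lemma linear_eq_zero_or_sign_eq_of_mem_asymptoticCone
    (hv : v ∈ asymptoticCone ℝ (signLocus φ s)) :
    φ.linear v = 0 ∨ SignType.sign (φ.linear v) = s := by
  obtain ⟨x, hx⟩ := asymptoticCone_nonempty.mp ⟨v, hv⟩
  have hray (t : ℝ) (ht : 0 ≤ t) : SignType.sign (φ x + t * φ.linear v) = s := by
    rw [← map_add_smul]
    exact (isRelOpenConvex_signLocus φ s).add_smul_mem_of_mem_asymptoticCone hx hv ht
  refine or_iff_not_imp_left.mpr fun hne ↦ ?_
  rw [← hray (|φ x| / |φ.linear v| + 1) (by positivity)]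
  rcases lt_or_gt_of_ne hne with hneg | hpos
  · have : (|φ x| / |φ.linear v| + 1) * φ.linear v = -|φ x| + φ.linear v := by
      rw [abs_of_neg hneg]; field_simp
    rw [this, sign_neg hneg, sign_neg (by linarith [le_abs_self (φ x)])]
  · have : (|φ x| / |φ.linear v| + 1) * φ.linear v = |φ x| + φ.linear v := by
      rw [abs_of_pos hpos]; field_simp
    rw [this, sign_pos hpos, sign_pos (by linarith [neg_abs_le (φ x)])]

lemma linear_eq_zero_of_mem_asymptoticCone_signLocus_zero
    (hv : v ∈ asymptoticCone ℝ (signLocus φ 0)) : φ.linear v = 0 :=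
  (linear_eq_zero_or_sign_eq_of_mem_asymptoticCone hv).elim id sign_eq_zero_iff.mp

lemma linear_eq_zero_of_mem_asymptoticCone_of_neg_mem (hv : v ∈ asymptoticCone ℝ (signLocus φ s))
    (hv' : -v ∈ asymptoticCone ℝ (signLocus φ s)) : φ.linear v = 0 := by
  rcases linear_eq_zero_or_sign_eq_of_mem_asymptoticCone hv with h | h
  · exact h
  rcases linear_eq_zero_or_sign_eq_of_mem_asymptoticCone hv' with h' | h'
  · rwa [map_neg, neg_eq_zero] at h'
  · rw [map_neg, Left.sign_neg, h] at h'
    rw [(SignType.neg_eq_self_iff).mp h'] at h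
    exact sign_eq_zero_iff.mp h

lemma mem_asymptoticCone_inter_signLocus (hC : IsRelOpenConvex C)
    (hne : (C ∩ signLocus φ s).Nonempty) (hv : v ∈ asymptoticCone ℝ C) (hφv : φ.linear v = 0) :
    v ∈ asymptoticCone ℝ (C ∩ signLocus φ s) := by
  obtain ⟨x, hxC, hxs⟩ := hne
  refine mem_asymptoticCone_of_ray (x := x) fun t ht ↦
    ⟨hC.add_smul_mem_of_mem_asymptoticCone hxC hv ht, ?_⟩
  have : SignType.sign (φ (x + t • v)) = SignType.sign (φ x) := by
    rw [map_add_smul, hφv, mul_zero, add_zero]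
  exact this.trans hxs

lemma eq_zero_of_mem_asymptoticCone_of_isBounded (hC : IsRelOpenConvex C)
    (hne : (C ∩ signLocus φ s).Nonempty) (hbdd : IsBounded (C ∩ signLocus φ s))
    (hv : v ∈ asymptoticCone ℝ C) (hφv : φ.linear v = 0) : v = 0 :=
  asymptoticCone_subset_singleton_of_bounded hbdd
    (mem_asymptoticCone_inter_signLocus hC hne hv hφv)

lemma isBounded_inter_signLocus_zero (hC : IsRelOpenConvex C)
    (hne : (C ∩ signLocus φ s).Nonempty) (hbdd : IsBounded (C ∩ signLocus φ s)) :
    IsBounded (C ∩ signLocus φ 0) := by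
  refine isBounded_iff_asymptoticCone_subset_singleton.mpr fun v hv ↦ ?_
  exact eq_zero_of_mem_asymptoticCone_of_isBounded hC hne hbdd
    (asymptoticCone_mono Set.inter_subset_left hv)
    (linear_eq_zero_of_mem_asymptoticCone_signLocus_zero
      (asymptoticCone_mono Set.inter_subset_right hv))

-- Asymptotic directions on the two sides have a positive combination along which `φ` is constant.
lemma isBounded_inter_signLocus_one_or_neg_one (hC : IsRelOpenConvex C) (hfree : LineFree C)
    (hne : (C ∩ signLocus φ 0).Nonempty) (hbdd : IsBounded (C ∩ signLocus φ 0)) :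
    IsBounded (C ∩ signLocus φ 1) ∨ IsBounded (C ∩ signLocus φ (-1)) := by
  by_contra! ⟨hpos, hneg⟩
  obtain ⟨v, hv0, hv⟩ := not_bounded_iff_exists_ne_zero_mem_asymptoticCone.mp hpos
  obtain ⟨w, hw0, hw⟩ := not_bounded_iff_exists_ne_zero_mem_asymptoticCone.mp hneg
  have hvC := asymptoticCone_mono Set.inter_subset_left hv
  have hwC := asymptoticCone_mono Set.inter_subset_left hw
  have hflat {u : E} := eq_zero_of_mem_asymptoticCone_of_isBounded (v := u) hC hne hbdd
  have hφv : 0 < φ.linear v := sign_eq_one_iff.mp <|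
    (linear_eq_zero_or_sign_eq_of_mem_asymptoticCone
      (asymptoticCone_mono Set.inter_subset_right hv)).resolve_left (hv0 ∘ hflat hvC)
  have hφw : φ.linear w < 0 := sign_eq_neg_one_iff.mp <|
    (linear_eq_zero_or_sign_eq_of_mem_asymptoticCone
      (asymptoticCone_mono Set.inter_subset_right hw)).resolve_left (hw0 ∘ hflat hwC)
  have hcomb : φ.linear v • w + (-φ.linear w) • v = 0 := by
    refine hflat (add_mem_asymptoticCone hC.convex (smul_mem_asymptoticCone hφv.le hwC)
      (smul_mem_asymptoticCone (neg_nonneg.mpr hφw.le) hvC)) ?_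
    simp only [map_add, map_smul, smul_eq_mul]
    ring
  have hopp : -v ∈ asymptoticCone ℝ C := by
    rw [← smul_mem_asymptoticCone_iff (neg_pos.mpr hφw), smul_neg,
      ← eq_neg_of_add_eq_zero_left hcomb]
    exact smul_mem_asymptoticCone hφv.le hwC
  exact hv0 (hfree v hvC hopp)

end AsymptoticDirections

section BoundedWeight

variable {E : Type*} [NormedAddCommGroup E] [NormedSpace ℝ E] {C : Set E}

open Classical in
/-- The contribution `(-1) ^ dim C` of a nonempty bounded set `C` to the Euler characteristic of
the bounded part of an arrangement; empty and unbounded sets contribute nothing. -/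
def boundedWeight (C : Set E) : ℤ :=
  if C.Nonempty ∧ IsBounded C then (-1) ^ finrank ℝ (vectorSpan ℝ C) else 0

@[simp]
lemma boundedWeight_empty : boundedWeight (∅ : Set E) = 0 := by
  simp [boundedWeight]

lemma boundedWeight_of_isBounded (hne : C.Nonempty) (hC : IsBounded C) :
    boundedWeight C = (-1) ^ finrank ℝ (vectorSpan ℝ C) :=
  if_pos ⟨hne, hC⟩

lemma boundedWeight_singleton (x : E) : boundedWeight {x} = 1 := by
  rw [boundedWeight_of_isBounded (Set.singleton_nonempty x) isBounded_singleton,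
    vectorSpan_singleton, finrank_bot, pow_zero]

lemma boundedWeight_of_not_isBounded (hC : ¬IsBounded C) : boundedWeight C = 0 :=
  if_neg fun h ↦ hC h.2

variable {φ : E →ᵃ[ℝ] ℝ}

lemma sum_signType {M : Type*} [AddCommMonoid M] (f : SignType → M) :
    ∑ s, f s = f 0 + f (-1) + f 1 := by
  simp [SignType.univ_eq, add_assoc]

lemma boundedWeight_cut_of_subset {s : SignType} (h : C ⊆ signLocus φ s) :
    ∑ s', boundedWeight (C ∩ signLocus φ s') = boundedWeight C := by
  rw [Finset.sum_eq_single s, Set.inter_eq_left.mpr h]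
  · intro s' _ hne
    have : C ∩ signLocus φ s' = ∅ :=
      Set.eq_empty_of_forall_notMem fun x hx ↦ hne (hx.2.symm.trans (h hx.1))
    rw [this, boundedWeight_empty]
  · exact fun hs ↦ absurd (Finset.mem_univ s) hs

lemma isBounded_of_isBounded_inter_signLocus (h : ∀ s, IsBounded (C ∩ signLocus φ s)) :
    IsBounded C :=
  (isBounded_iUnion.mpr h).subset fun x hx ↦
    Set.mem_iUnion.mpr ⟨_, hx, mem_signLocus_sign φ x⟩

lemma inter_signLocus_nonempty {x y : E} (hC : IsRelOpenConvex C) (hx : x ∈ C ∩ signLocus φ 0)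
    (hy : y ∈ C) (hφy : φ y ≠ 0) (s : SignType) : (C ∩ signLocus φ s).Nonempty := by
  have hφx : φ x = 0 := mem_signLocus_zero.mp hx.2
  set v : E := ((s : ℝ) / φ y) • (y - x) with hv
  have hφv : φ.linear v = s := by
    rw [hv, map_smul, linear_sub, hφx, sub_zero, smul_eq_mul, div_mul_cancel₀ _ hφy]
  have hvC : v ∈ vectorSpan ℝ C := Submodule.smul_mem _ _ (vsub_mem_vectorSpan ℝ hy hx.1)
  obtain ⟨t, htC, ht⟩ := (((hC.eventually_add_smul_mem hx.1 hvC).filter_mono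
    nhdsWithin_le_nhds).and (self_mem_nhdsWithin (s := Set.Ioi (0 : ℝ)))).exists
  refine ⟨x + t • v, htC, ?_⟩
  change SignType.sign (φ (x + t • v)) = s
  rw [map_add_smul, hφx, zero_add, hφv, sign_mul, sign_pos ht, one_mul]
  cases s <;> simp

variable [FiniteDimensional ℝ E]

lemma exists_subset_signLocus_of_isPreconnected (hC : IsPreconnected C)
    (hzero : C ∩ signLocus φ 0 = ∅) : ∃ s, C ⊆ signLocus φ s := by
  rcases C.eq_empty_or_nonempty with rfl | ⟨x, hx⟩
  · exact ⟨0, Set.empty_subset _⟩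
  have hcont : ContinuousOn (fun y ↦ SignType.sign (φ y)) C := fun y hy ↦ by
    have hφy : φ y ≠ 0 := fun h ↦ hzero.subset ⟨hy, mem_signLocus_zero.mpr h⟩
    exact ((continuousAt_sign_of_ne_zero hφy).comp
      φ.continuous_of_finiteDimensional.continuousAt).continuousWithinAt
  exact ⟨SignType.sign (φ x), fun y hy ↦ hC.constant hcont hy hx⟩

lemma boundedWeight_cut_of_crossing {x y : E} (hC : IsRelOpenConvex C) (hfree : LineFree C)
    (hx : x ∈ C ∩ signLocus φ 0) (hy : y ∈ C) (hφy : φ y ≠ 0) :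
    ∑ s, boundedWeight (C ∩ signLocus φ s) = boundedWeight C := by
  have hne := inter_signLocus_nonempty hC hx hy hφy
  have hdim := finrank_vectorSpan_inter_signLocus_zero_add_one hC hx hy hφy
  have hside {s : SignType} (hs : s ≠ 0) (h : IsBounded (C ∩ signLocus φ s)) :
      boundedWeight (C ∩ signLocus φ s) =
        -(-1) ^ finrank ℝ (vectorSpan ℝ (C ∩ signLocus φ 0)) := by
    rw [boundedWeight_of_isBounded (hne s) h, finrank_vectorSpan_inter_signLocus hC hs (hne s),
      ← hdim, pow_succ, mul_neg_one]
  have hwhole {s : SignType} (h : ¬IsBounded (C ∩ signLocus φ s)) : boundedWeight C = 0 :=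
    boundedWeight_of_not_isBounded fun hbdd ↦ h (hbdd.subset Set.inter_subset_left)
  rw [sum_signType]
  by_cases hzero : IsBounded (C ∩ signLocus φ 0)
  · rw [boundedWeight_of_isBounded (hne 0) hzero]
    by_cases hneg : IsBounded (C ∩ signLocus φ (-1)) <;>
      by_cases hpos : IsBounded (C ∩ signLocus φ 1)
    · have hbdd : IsBounded C := isBounded_of_isBounded_inter_signLocus (φ := φ) fun s ↦ by
        cases s <;> assumption
      rw [hside (by decide) hneg, hside (by decide) hpos,
        boundedWeight_of_isBounded ⟨y, hy⟩ hbdd, ← hdim]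
      ring
    · rw [hside (by decide) hneg, boundedWeight_of_not_isBounded hpos, hwhole hpos]
      ring
    · rw [hside (by decide) hpos, boundedWeight_of_not_isBounded hneg, hwhole hneg]
      ring
    · exact ((isBounded_inter_signLocus_one_or_neg_one hC hfree (hne 0) hzero).elim hpos hneg).elim
  · have hall (s : SignType) : boundedWeight (C ∩ signLocus φ s) = 0 :=
      boundedWeight_of_not_isBounded (hzero ∘ isBounded_inter_signLocus_zero hC (hne s))
    rw [hall, hall, hall, hwhole hzero]
    rfl

lemma boundedWeight_cut (hC : IsRelOpenConvex C) (hfree : LineFree C) (φ : E →ᵃ[ℝ] ℝ) :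
    ∑ s, boundedWeight (C ∩ signLocus φ s) = boundedWeight C := by
  by_cases hsub : ∃ s, C ⊆ signLocus φ s
  · obtain ⟨s, hs⟩ := hsub
    exact boundedWeight_cut_of_subset hs
  · have hzero : C ∩ signLocus φ 0 ≠ ∅ :=
      hsub ∘ exists_subset_signLocus_of_isPreconnected hC.convex.isPreconnected
    obtain ⟨x, hx⟩ := Set.nonempty_iff_ne_empty.mpr hzero
    obtain ⟨y, hy, hφy⟩ := Set.not_subset.mp fun h ↦ hsub ⟨0, h⟩
    exact boundedWeight_cut_of_crossing hC hfree hx hy (hφy ∘ mem_signLocus_zero.mpr)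

lemma sum_boundedWeight_signCell {κ : Type*} [Fintype κ] [DecidableEq κ] (φ : κ → E →ᵃ[ℝ] ℝ)
    (hC : IsRelOpenConvex C) (hfree : LineFree C) :
    ∑ τ : κ → SignType, boundedWeight (C ∩ signCell φ τ) = boundedWeight C := by
  refine Fintype.induction_empty_option (P := fun κ _ ↦ ∀ [DecidableEq κ]
    (φ : κ → E →ᵃ[ℝ] ℝ) {C : Set E}, IsRelOpenConvex C → LineFree C →
      ∑ τ : κ → SignType, boundedWeight (C ∩ signCell φ τ) = boundedWeight C) ?_ ?_ ?_ κ φ hC hfree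
  · intro α β _ e ih _ φ C hC hfree
    classical
    let _ := Fintype.ofEquiv β e.symm
    rw [← ih (φ ∘ e) hC hfree]
    exact Fintype.sum_equiv (e.symm.arrowCongr (Equiv.refl SignType)) _ _ fun τ ↦
      congrArg (fun D ↦ boundedWeight (C ∩ D)) (signCell_comp_equiv e φ τ).symm
  · intro _ φ C _ _
    simp [signCell]
  · intro κ _ ih _ φ C hC hfree
    classical
    calc ∑ τ : Option κ → SignType, boundedWeight (C ∩ signCell φ τ)
        = ∑ s, ∑ τ : κ → SignType,
            boundedWeight (C ∩ signLocus (φ none) s ∩ signCell (φ ∘ some) τ) := by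
          rw [← Fintype.sum_prod_type']
          refine Fintype.sum_equiv Equiv.piOptionEquivProd _ _ fun τ ↦ ?_
          rw [Set.inter_assoc, signCell, Set.iInter_option]
          rfl
      _ = ∑ s, boundedWeight (C ∩ signLocus (φ none) s) :=
          Fintype.sum_congr _ _ fun s ↦ ih _ (hC.inter (isRelOpenConvex_signLocus _ s))
            (hfree.mono Set.inter_subset_left)
      _ = boundedWeight C := boundedWeight_cut hC hfree (φ none)

end BoundedWeight

section EssentialVertex

variable {E : Type*} [AddCommGroup E] [Module ℝ E]
  {κ : Type*} {ℓ : κ → E →ᵃ[ℝ] ℝ} {A : AffineSubspace ℝ E} {p : E}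

/-- A family of affine functionals is essential on an affine subspace if no nonzero direction of
the subspace is annihilated by all of its linear parts. -/
def IsEssentialOn (ℓ : κ → E →ᵃ[ℝ] ℝ) (A : AffineSubspace ℝ E) : Prop :=
  ∀ v ∈ A.direction, (∀ k, (ℓ k).linear v = 0) → v = 0

lemma exists_zeroSet_ssubset {v : E} (hp : p ∈ A) (hv : v ∈ A.direction)
    (hzero : ∀ k, ℓ k p = 0 → (ℓ k).linear v = 0) {j : κ} (hj : (ℓ j).linear v ≠ 0) :
    ∃ q ∈ A, {k | ℓ k p = 0} ⊂ {k | ℓ k q = 0} := by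
  refine ⟨p + (-ℓ j p / (ℓ j).linear v) • v, ?_, Set.ssubset_iff_of_subset ?_ |>.mpr ⟨j, ?_, ?_⟩⟩
  · rw [add_comm]
    exact AffineSubspace.vadd_mem_of_mem_direction (A.direction.smul_mem _ hv) hp
  · intro k (hk : ℓ k p = 0)
    change ℓ k _ = 0
    rw [map_add_smul, hk, hzero k hk, mul_zero, add_zero]
  · change ℓ j _ = 0
    rw [map_add_smul, div_mul_cancel₀ _ hj, add_neg_cancel]
  · exact fun hjp ↦ hj (hzero j hjp)

-- A point of `A` lying on a maximal set of hyperplanes is a vertex.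
lemma IsEssentialOn.exists_vertex [Finite κ] (hℓ : IsEssentialOn ℓ A) (hA : (A : Set E).Nonempty) :
    ∃ p ∈ A, IsEssentialOn (fun k : {k // ℓ k p = 0} ↦ ℓ k) A := by
  obtain ⟨p, hp, hmax⟩ := Set.Finite.exists_maximalFor' (fun q : E ↦ {k | ℓ k q = 0}) (A : Set E)
    (Set.toFinite _) hA
  refine ⟨p, hp, fun v hv hzero ↦ hℓ v hv fun j ↦ ?_⟩
  by_contra hj
  obtain ⟨q, hq, hlt⟩ := exists_zeroSet_ssubset hp hv (fun k hk ↦ hzero ⟨k, hk⟩) hj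
  exact hlt.not_subset (hmax hq hlt.subset)

lemma IsEssentialOn.inter_signCell_zero (hℓ : IsEssentialOn ℓ A) (hp : p ∈ A)
    (hpℓ : ∀ k, ℓ k p = 0) : (A : Set E) ∩ signCell ℓ 0 = {p} := by
  refine Set.eq_singleton_iff_unique_mem.mpr
    ⟨⟨hp, Set.mem_iInter.mpr fun k ↦ mem_signLocus_zero.mpr (hpℓ k)⟩, fun x hx ↦ ?_⟩
  refine sub_eq_zero.mp (hℓ _ (AffineSubspace.vsub_mem_direction hx.1 hp) fun k ↦ ?_)
  rw [linear_sub, hpℓ k, mem_signLocus_zero.mp (Set.mem_iInter.mp hx.2 k), sub_zero]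

end EssentialVertex

section EssentialFamily

variable {E : Type*} [NormedAddCommGroup E] [NormedSpace ℝ E]
  {κ : Type*} {ℓ : κ → E →ᵃ[ℝ] ℝ} {A : AffineSubspace ℝ E} {p : E}

lemma isRelOpenConvex_inter_signCell [FiniteDimensional ℝ E] [Finite κ] (A : AffineSubspace ℝ E)
    (ℓ : κ → E →ᵃ[ℝ] ℝ) (τ : κ → SignType) : IsRelOpenConvex ((A : Set E) ∩ signCell ℓ τ) :=
  (IsRelOpenConvex.of_affineSubspace A).inter (isRelOpenConvex_signCell ℓ τ)

lemma IsEssentialOn.lineFree [FiniteDimensional ℝ E] (hℓ : IsEssentialOn ℓ A) (hA : p ∈ A)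
    (τ : κ → SignType) : LineFree ((A : Set E) ∩ signCell ℓ τ) := by
  intro v hv hv'
  refine hℓ v ?_ fun k ↦ ?_
  · have := asymptoticCone_mono Set.inter_subset_left hv
    rwa [asymptoticCone_affineSubspace ⟨p, hA⟩,
      A.direction.closed_of_finiteDimensional.closure_eq] at this
  · have hsub : (A : Set E) ∩ signCell ℓ τ ⊆ signLocus (ℓ k) (τ k) :=
      fun x hx ↦ Set.mem_iInter.mp hx.2 k
    exact linear_eq_zero_of_mem_asymptoticCone_of_neg_mem (asymptoticCone_mono hsub hv)
      (asymptoticCone_mono hsub hv')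

-- The cell is a cone with apex `p`, so the ray from `p` through any of its points stays in it.
lemma not_isBounded_inter_signCell (hp : p ∈ A) (hpℓ : ∀ k, ℓ k p = 0) {τ : κ → SignType}
    (hτ : τ ≠ 0) (hne : ((A : Set E) ∩ signCell ℓ τ).Nonempty) :
    ¬IsBounded ((A : Set E) ∩ signCell ℓ τ) := by
  obtain ⟨x, hxA, hx⟩ := hne
  obtain ⟨k, hk⟩ := Function.ne_iff.mp hτ
  have hxp : x - p ≠ 0 := fun h ↦ hk <| by
    rw [← Set.mem_iInter.mp hx k, sub_eq_zero.mp h, hpℓ k, sign_zero, Pi.zero_apply]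
  refine fun hbdd ↦ hxp (asymptoticCone_subset_singleton_of_bounded hbdd
    (mem_asymptoticCone_of_ray (x := x) fun t ht ↦ ⟨?_, Set.mem_iInter.mpr fun k ↦ ?_⟩))
  · rw [add_comm]
    exact AffineSubspace.vadd_mem_of_mem_direction
      (A.direction.smul_mem t (AffineSubspace.vsub_mem_direction hxA hp)) hxA
  · have hray : ℓ k (x + t • (x - p)) = (1 + t) * ℓ k x := by
      rw [map_add_smul, linear_sub, hpℓ k]
      ring
    change SignType.sign (ℓ k (x + t • (x - p))) = τ k
    rw [hray, sign_mul, sign_pos (by positivity), one_mul]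
    exact Set.mem_iInter.mp hx k

lemma sum_boundedWeight_central [Fintype κ] [DecidableEq κ] (hℓ : IsEssentialOn ℓ A) (hp : p ∈ A)
    (hpℓ : ∀ k, ℓ k p = 0) :
    ∑ τ : κ → SignType, boundedWeight ((A : Set E) ∩ signCell ℓ τ) = 1 := by
  rw [Fintype.sum_eq_single 0, hℓ.inter_signCell_zero hp hpℓ, boundedWeight_singleton]
  intro τ hτ
  exact if_neg fun h ↦ not_isBounded_inter_signCell hp hpℓ hτ h.1 h.2

-- Cells on which the hyperplanes through a vertex `p` have prescribed signs reassemble to a cone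
-- with apex `p`, so only the cone `{p}` contributes.
theorem IsEssentialOn.sum_boundedWeight [FiniteDimensional ℝ E] [Fintype κ] [DecidableEq κ]
    (hℓ : IsEssentialOn ℓ A) (hA : (A : Set E).Nonempty) :
    ∑ σ : κ → SignType, boundedWeight ((A : Set E) ∩ signCell ℓ σ) = 1 := by
  classical
  obtain ⟨p, hp, hvertex⟩ := hℓ.exists_vertex hA
  let through (k : {k // ℓ k p = 0}) : E →ᵃ[ℝ] ℝ := ℓ k
  let away (k : {k // ¬ℓ k p = 0}) : E →ᵃ[ℝ] ℝ := ℓ k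
  calc ∑ σ : κ → SignType, boundedWeight ((A : Set E) ∩ signCell ℓ σ)
      = ∑ τ, ∑ ρ, boundedWeight ((A : Set E) ∩ signCell through τ ∩ signCell away ρ) := by
        rw [← Fintype.sum_prod_type']
        refine Fintype.sum_equiv (Equiv.piEquivPiSubtypeProd (fun k ↦ ℓ k p = 0) _) _ _ fun σ ↦ ?_
        rw [Set.inter_assoc, signCell_eq_inter (fun k ↦ ℓ k p = 0)]
        rfl
    _ = ∑ τ, boundedWeight ((A : Set E) ∩ signCell through τ) :=
        Fintype.sum_congr _ _ fun τ ↦ sum_boundedWeight_signCell away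
          (isRelOpenConvex_inter_signCell A through τ) (hvertex.lineFree hp τ)
    _ = 1 := sum_boundedWeight_central hvertex hp Subtype.prop

end EssentialFamily

section AffineImage

variable {E F G : Type*} [AddCommGroup E] [Module ℝ E]

lemma finrank_vectorSpan_image_add_finrank_ker [FiniteDimensional ℝ E] [AddCommGroup F]
    [Module ℝ F] (f : E →ᵃ[ℝ] F) {C : Set E}
    (hC : LinearMap.ker f.linear ≤ vectorSpan ℝ C) :
    finrank ℝ (vectorSpan ℝ (f '' C)) + finrank ℝ (LinearMap.ker f.linear) =
      finrank ℝ (vectorSpan ℝ C) := by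
  have hrange : LinearMap.range (f.linear.domRestrict (vectorSpan ℝ C)) =
      vectorSpan ℝ (f '' C) := by
    rw [LinearMap.range_domRestrict, f.map_vectorSpan]
  have hker : finrank ℝ (LinearMap.ker (f.linear.domRestrict (vectorSpan ℝ C))) =
      finrank ℝ (LinearMap.ker f.linear) := by
    rw [LinearMap.ker_domRestrict]
    exact (Submodule.comapSubtypeEquivOfLe hC).finrank_eq
  rw [← hrange, ← hker, LinearMap.finrank_range_add_finrank_ker]

lemma exists_comp_eq_of_ker_le [AddCommGroup F] [Module ℝ F] [AddCommGroup G] [Module ℝ G]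
    {f : E →ₗ[ℝ] F} {g : E →ₗ[ℝ] G} (h : LinearMap.ker f ≤ LinearMap.ker g) :
    ∃ m : F →ₗ[ℝ] G, m ∘ₗ f = g := by
  obtain ⟨k, hk⟩ := ((LinearMap.ker f).liftQ f le_rfl).exists_leftInverse_of_injective
    (Submodule.ker_liftQ_eq_bot' _ f rfl)
  refine ⟨(LinearMap.ker f).liftQ g h ∘ₗ k, LinearMap.ext fun x ↦ ?_⟩
  have : k (f x) = (LinearMap.ker f).mkQ x := LinearMap.congr_fun hk ((LinearMap.ker f).mkQ x)
  rw [LinearMap.comp_apply, LinearMap.comp_apply, this, Submodule.mkQ_apply, Submodule.liftQ_apply]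

lemma isBounded_image_of_ker_linear_le [SeminormedAddCommGroup F] [NormedSpace ℝ F] [T2Space F]
    [FiniteDimensional ℝ F] [SeminormedAddCommGroup G] [NormedSpace ℝ G] {f : E →ᵃ[ℝ] F}
    {g : E →ᵃ[ℝ] G} (h : LinearMap.ker f.linear ≤ LinearMap.ker g.linear) {C : Set E}
    (hC : IsBounded (f '' C)) : IsBounded (g '' C) := by
  obtain ⟨m, hm⟩ := exists_comp_eq_of_ker_le h
  have hlin (x : E) : m (f x - f 0) = g x - g 0 :=
    calc m (f x - f 0) = m (f.linear (x - 0)) := congrArg m (linear_sub f x 0).symm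
      _ = g.linear (x - 0) := LinearMap.congr_fun hm _
      _ = g x - g 0 := linear_sub g x 0
  have hfactor (x : E) : g x = (g 0 - m (f 0)) + m (f x) := by
    rw [sub_add_eq_add_sub, add_sub_assoc, ← map_sub, hlin, add_sub_cancel]
  have himage : g '' C = (fun y ↦ (g 0 - m (f 0)) + y) '' (m '' (f '' C)) := by
    simp only [Set.image_image, ← hfactor]
  rw [himage]
  exact (isometry_add_left _).lipschitz.isBounded_image
    (m.toContinuousLinearMap.lipschitz.isBounded_image hC)

end AffineImage

section Arrangement

/-- The values of the functionals of `𝒜`, combined into one affine map. It collapses exactly the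
directions in `dirL 𝒜`, so its image is an essentialization of the arrangement. -/
def formMap : V n →ᵃ[ℝ] (Idx 𝒜 → ℝ) := AffineMap.pi fun ℓ ↦ ℓ.1

/-- The coordinate functionals on the codomain of `formMap 𝒜`; they cut its image into the
images of the faces. -/
def coordForm (ℓ : Idx 𝒜) : (Idx 𝒜 → ℝ) →ᵃ[ℝ] ℝ := AffineMap.proj ℓ

lemma ker_linear_formMap : LinearMap.ker (formMap 𝒜).linear = dirL 𝒜 := by
  rw [formMap, AffineMap.pi_linear, LinearMap.ker_pi, dirL]

lemma formMap_preimage_signCell (σ : Idx 𝒜 → SignType) :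
    formMap 𝒜 ⁻¹' signCell (coordForm 𝒜) σ = faceSet 𝒜 σ := by
  ext x
  exact Set.mem_iInter

lemma isEssentialOn_coordForm (A : AffineSubspace ℝ (Idx 𝒜 → ℝ)) :
    IsEssentialOn (coordForm 𝒜) A :=
  fun _ _ hv ↦ funext hv

variable {𝒜}

lemma dirL_le_vectorSpan_carrier (F : Face 𝒜) : dirL 𝒜 ≤ vectorSpan ℝ F.carrier := by
  intro v hv
  obtain ⟨x, hx⟩ := F.nonempty
  have hxv : x + v ∈ F.carrier := fun ℓ ↦ by
    have hlin : ℓ.1.linear v = 0 := (Submodule.mem_iInf _).1 hv ℓ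
    rw [← one_smul ℝ v, map_add_smul, hlin, mul_zero, add_zero]
    exact hx ℓ
  rw [← add_sub_cancel_left x v]
  exact vsub_mem_vectorSpan ℝ hxv hx

lemma essBounded_iff_isBounded_image_formMap (F : Face 𝒜) :
    EssBounded 𝒜 F ↔ IsBounded (formMap 𝒜 '' F.carrier) := by
  have : IsClosed (dirL 𝒜 : Set (V n)) := (dirL 𝒜).closed_of_finiteDimensional
  have hker : LinearMap.ker (dirL 𝒜).mkQ.toAffineMap.linear =
      LinearMap.ker (formMap 𝒜).linear := by
    rw [ker_linear_formMap]
    exact (dirL 𝒜).ker_mkQ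
  exact ⟨isBounded_image_of_ker_linear_le (f := (dirL 𝒜).mkQ.toAffineMap) hker.le,
    isBounded_image_of_ker_linear_le (g := (dirL 𝒜).mkQ.toAffineMap) hker.ge⟩

lemma finrank_vectorSpan_image_formMap (F : Face 𝒜) :
    finrank ℝ (vectorSpan ℝ (formMap 𝒜 '' F.carrier)) =
      dimS F.carrier - finrank ℝ (dirL 𝒜) := by
  rw [dimS, ← finrank_vectorSpan_image_add_finrank_ker (formMap 𝒜)
    ((ker_linear_formMap 𝒜).trans_le (dirL_le_vectorSpan_carrier F)), ker_linear_formMap,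
    Nat.add_sub_cancel]

open Classical in
lemma boundedWeight_image_formMap (F : Face 𝒜) :
    boundedWeight (formMap 𝒜 '' F.carrier) =
      if EssBounded 𝒜 F then (-1) ^ (dimS F.carrier - finrank ℝ (dirL 𝒜)) else 0 := by
  have hne : (formMap 𝒜 '' F.carrier).Nonempty := F.nonempty.image _
  simp only [boundedWeight, hne, true_and, finrank_vectorSpan_image_formMap,
    essBounded_iff_isBounded_image_formMap]

lemma supp_subset_iff {F : Face 𝒜} {x : V n} (hx : x ∈ F.carrier) (X : Flat 𝒜) :
    (supp 𝒜 F).1 ⊆ X.1 ↔ x ∈ X.1 := by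
  have hzero (ℓ : Idx 𝒜) : F.sgn ℓ = 0 ↔ x ∈ hypSet ℓ.1 := by
    rw [← hx ℓ]
    exact sign_eq_zero_iff
  refine ⟨fun h ↦ h (Set.mem_iInter₂.2 fun ℓ ↦ (hzero ℓ).1), fun hxX ↦ ?_⟩
  rw [flat_eq_inter 𝒜 X]
  exact Set.biInter_subset_biInter_left fun ℓ hℓ ↦ (hzero ℓ).2 (hℓ hxX)

open Classical in
lemma flat_inter_carrier (X : Flat 𝒜) (F : Face 𝒜) :
    X.1 ∩ F.carrier = if (supp 𝒜 F).1 ⊆ X.1 then F.carrier else ∅ := by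
  split_ifs with h
  · exact Set.inter_eq_right.2 fun x hx ↦ (supp_subset_iff hx X).1 h
  · exact Set.eq_empty_of_forall_notMem fun x hx ↦ h ((supp_subset_iff hx.2 X).2 hx.1)

lemma exists_affineSubspace_coe_eq (X : Flat 𝒜) :
    ∃ A : AffineSubspace ℝ (V n), (A : Set (V n)) = X.1 := by
  obtain ⟨P, hP⟩ := X.2.2
  refine ⟨⨅ ℓ ∈ {ℓ | P ℓ}, zeroSubspace ℓ.1, ?_⟩
  simp only [hP, AffineSubspace.coe_iInf]
  rfl

open Classical in
lemma sum_boundedWeight_faces (A : AffineSubspace ℝ (V n)) :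
    ∑ F : Face 𝒜, boundedWeight (formMap 𝒜 '' ((A : Set (V n)) ∩ F.carrier)) =
      ∑ σ, boundedWeight ((A.map (formMap 𝒜) : Set (Idx 𝒜 → ℝ)) ∩ signCell (coordForm 𝒜) σ) := by
  have hcell (σ) : formMap 𝒜 '' ((A : Set (V n)) ∩ faceSet 𝒜 σ) =
      (A.map (formMap 𝒜) : Set (Idx 𝒜 → ℝ)) ∩ signCell (coordForm 𝒜) σ := by
    rw [← formMap_preimage_signCell, Set.image_inter_preimage, AffineSubspace.coe_map]
  refine Fintype.sum_of_injective Face.sgn (fun F G ↦ Face.ext) _ _ (fun σ hσ ↦ ?_)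
    fun F ↦ congrArg boundedWeight (hcell F.sgn)
  have hempty : faceSet 𝒜 σ = ∅ :=
    Set.not_nonempty_iff_eq_empty.1 fun h ↦ hσ ⟨⟨σ, h⟩, rfl⟩
  rw [← hcell, hempty, Set.inter_empty, Set.image_empty, boundedWeight_empty]

open Classical in
lemma coeff_eq_boundedWeight (X : Flat 𝒜) (F : Face 𝒜) :
    (if (supp 𝒜 F).1 ⊆ X.1 then
      if EssBounded 𝒜 F then (-1 : ℝ) ^ (dimS F.carrier - finrank ℝ (dirL 𝒜)) else 0 else 0) =
      boundedWeight (formMap 𝒜 '' (X.1 ∩ F.carrier)) := by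
  rw [flat_inter_carrier, apply_ite (formMap 𝒜 '' ·), apply_ite boundedWeight, Set.image_empty,
    boundedWeight_empty, boundedWeight_image_formMap]
  push_cast
  rfl

end Arrangement

end UnitElement

open Classical in
/-- **Proposition.** The unit element `υ = Σ_{F essentially bounded} (-1)^{rk F} H_F`
of the Tits algebra is characteristic of parameter `1`. -/
theorem unit_isCharacteristic {n : ℕ} (𝒜 : Finset (AffForm n))
    (h𝒜 : ∀ ℓ ∈ 𝒜, ℓ.linear ≠ 0) :
    IsCharacteristic 𝒜 (Module.finrank ℝ (dirL 𝒜))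
      (fun F => if EssBounded 𝒜 F then
        (-1 : ℝ) ^ (dimS (Face.carrier 𝒜 F) - Module.finrank ℝ (dirL 𝒜)) else 0) 1 := by
  intro X
  obtain ⟨A, hA⟩ := exists_affineSubspace_coe_eq X
  have hne : (A.map (formMap 𝒜) : Set (Idx 𝒜 → ℝ)).Nonempty := by
    rw [AffineSubspace.coe_map, hA]
    exact X.2.1.image _
  have hsum : ∑ F : Face 𝒜, boundedWeight (formMap 𝒜 '' (X.1 ∩ F.carrier)) = 1 := by
    rw [← hA, sum_boundedWeight_faces]
    exact (isEssentialOn_coordForm 𝒜 _).sum_boundedWeight hne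
  rw [one_pow, Finset.sum_congr rfl fun F _ ↦ coeff_eq_boundedWeight X F]
  exact_mod_cast hsum

end CharElts
end
end
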